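/- (Topological Tverberg theorem) Let d ≥ 1 and let r be a prime power, and set N = (d+1)(r-1). For every continuous map f from the standard N-dimensional simplex Δ_N (the set of points in ℝ^{N+1} with nonnegative coordinates summing to 1, with N+1 vertices) to ℝ^d, there exist r pairwise disjoint subsets S_1, …, S_r of the vertex set of Δ_N and a point p ∈ ℝ^d such that p lies in the image under f of the face of Δ_N spanned by S_i, for every i = 1, …, r. Here the face spanned by a subset S of vertices is the set of points of Δ_N whose coordinates outside S all vanish. -/

import Mathlib

/-! Let `r = p ^ k`. Disjoint faces with points on them are configurations in the deleted join of
`r` copies of the simplex, on which the group `G = (ZMod p) ^ k` acts freely by permuting the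
copies. Extending `f` to the orthant so that it is homogeneous of degree one, and adjoining the
total mass as one more coordinate, reduces the theorem to finding a configuration `x` whose values
`Ψ (x g)`, for `g` in `G`, are all equal, where `Ψ` takes values in a space of dimension `d + 1`.

A function on `G` is constant as soon as, for each `i`, its sums over the fibres of the projection
to the coordinates from `i` on do not depend on coordinate `i`. The points of these quotients of `G`
fall into `(r - 1) / (p - 1)` lines, permuted by `G`, so that the coordinates of `Ψ` yield `d + 1`
copies of this set of lines. Suppose that no configuration has constant sums on all these lines.
Labelling each configuration by a point where a sum is maximal on its line, and exceeds another one
by a fixed amount, can be done equivariantly, and no small simplex of configurations carries all the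
labels of a line. Hence, after subdivision, the labelling sends the chains of the deleted join to
those of the join of the boundaries of the `(p - 1)`-simplices spanned by the lines, a sphere of
dimension `(d + 1) (r - 1) - 1`.

The deleted join is so highly connected that it receives an equivariant chain map from a tensor
product of periodic resolutions in degrees up to `(d + 1) (r - 1)`. On the other hand, truncated
periodic resolutions on the lines, multiplied by fundamental classes of other lines, form a family
that joins the empty simplex to a nonzero multiple of the fundamental class of the sphere, placed in
the multidegree that counts the lines in each direction. Comparing it with the image of the first
chain map makes that multiple a boundary in the sphere, which is impossible. -/

open Finset

theorem neg_one_zpow_mul_self {F : Type*} [Field F] (n : ℤ) : (-1 : F) ^ n * (-1) ^ n = 1 := by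
  rw [← mul_zpow]
  simp

theorem neg_one_zpow_sub_one {F : Type*} [Field F] (n : ℤ) : (-1 : F) ^ (n - 1) = -(-1) ^ n := by
  simp [zpow_sub_one₀]

/-- A chain complex over `ZMod p`, its grading forgotten, with an action of the elementary abelian
group `(ZMod p) ^ k` by chain maps. -/
structure EquivariantComplex (p k : ℕ) (M : Type*) [AddCommGroup M] [Module (ZMod p) M] where
  /-- The differential. -/
  d : M →ₗ[ZMod p] M
  /-- The action. -/
  act : (Fin k → ZMod p) → M →ₗ[ZMod p] M
  d_d : ∀ x, d (d x) = 0
  act_zero : ∀ x, act 0 x = x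
  act_add : ∀ g h x, act (g + h) x = act g (act h x)
  d_act : ∀ g x, d (act g x) = act g (d x)

namespace EquivariantComplex

variable {p k : ℕ} {M : Type*} [AddCommGroup M] [Module (ZMod p) M] (C : EquivariantComplex p k M)

/-- A submodule is a subcomplex if it is stable under the differential and the group action. -/
structure IsSubcomplex (S : Submodule (ZMod p) M) : Prop where
  d_mem : ∀ x ∈ S, C.d x ∈ S
  act_mem : ∀ g, ∀ x ∈ S, C.act g x ∈ S

/-- An invariant cycle of a subcomplex whose class is a basis of the homology of that subcomplex;
it plays the role of the fundamental class of a sphere. -/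
structure IsFundamentalCycle (S : Submodule (ZMod p) M) (Θ : M) : Prop where
  mem : Θ ∈ S
  act_eq : ∀ g, C.act g Θ = Θ
  d_eq_zero : C.d Θ = 0
  exists_eq_smul_add_d : ∀ z ∈ S, C.d z = 0 → ∃ c : ZMod p, ∃ w ∈ S, z = c • Θ + C.d w
  eq_zero_of_smul_eq_d : ∀ c : ZMod p, ∀ w ∈ S, c • Θ = C.d w → c = 0

theorem act_comm (g h : Fin k → ZMod p) (x : M) : C.act g (C.act h x) = C.act h (C.act g x) := by
  rw [← C.act_add, ← C.act_add, add_comm]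

section Periodic

variable [NeZero p]

/-- The differential leaving degree `a` in the periodic resolution of the `i`-th factor of
`(ZMod p) ^ k`: the norm element if `a` is even, and `g - 1`, for a generator `g`, if `a` is odd. -/
def periodic (i : Fin k) (a : ℤ) : M →ₗ[ZMod p] M :=
  if Even a then ∑ t : ZMod p, C.act (Pi.single i t) else C.act (Pi.single i 1) - LinearMap.id

theorem periodic_of_even (i : Fin k) {a : ℤ} (ha : Even a) (x : M) :
    C.periodic i a x = ∑ t : ZMod p, C.act (Pi.single i t) x := by
  simp [periodic, ha]

theorem periodic_of_odd (i : Fin k) {a : ℤ} (ha : Odd a) (x : M) :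
    C.periodic i a x = C.act (Pi.single i 1) x - x := by
  simp [periodic, Int.not_even_iff_odd.2 ha]

theorem map_periodic {M' : Type*} [AddCommGroup M'] [Module (ZMod p) M']
    {C' : EquivariantComplex p k M'} {L : M →ₗ[ZMod p] M'} {x : M}
    (hL : ∀ g, L (C.act g x) = C'.act g (L x)) (i : Fin k) (a : ℤ) :
    L (C.periodic i a x) = C'.periodic i a (L x) := by
  rcases Int.even_or_odd a with ha | ha
  · simp [periodic_of_even, ha, hL]
  · simp [periodic_of_odd, ha, hL]

theorem d_periodic (i : Fin k) (a : ℤ) (x : M) : C.d (C.periodic i a x) = C.periodic i a (C.d x) :=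
  C.map_periodic (fun g => C.d_act g x) i a

theorem periodic_comm (i j : Fin k) (a b : ℤ) (x : M) :
    C.periodic i a (C.periodic j b x) = C.periodic j b (C.periodic i a x) :=
  C.map_periodic (L := C.periodic i a)
    (fun g => (C.map_periodic (L := C.act g) (fun h => C.act_comm g h x) i a).symm) j b

theorem periodic_periodic_sub_one (i : Fin k) (a : ℤ) (x : M) :
    C.periodic i a (C.periodic i (a - 1) x) = 0 := by
  have norm_sub : ∑ t : ZMod p, C.act (Pi.single i t) (C.act (Pi.single i 1) x - x) = 0 := by
    simp only [map_sub, ← C.act_add, ← Pi.single_add, sum_sub_distrib]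
    exact sub_eq_zero.2
      (Equiv.sum_comp (Equiv.addRight (1 : ZMod p)) fun t => C.act (Pi.single i t) x)
  rcases Int.even_or_odd a with ha | ha
  · rw [C.periodic_of_odd i (ha.sub_odd odd_one), C.periodic_of_even i ha, norm_sub]
  · rw [C.periodic_comm, C.periodic_of_odd i ha, C.periodic_of_even i (ha.sub_odd odd_one),
      norm_sub]

theorem periodic_eq_zero_of_act_eq (i : Fin k) (a : ℤ) {x : M} (hx : ∀ g, C.act g x = x) :
    C.periodic i a x = 0 := by
  rcases Int.even_or_odd a with ha | ha
  · rw [C.periodic_of_even i ha]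
    simp [hx, ← Nat.cast_smul_eq_nsmul (ZMod p)]
  · simp [C.periodic_of_odd i ha, hx]

theorem periodic_mem {S : Submodule (ZMod p) M} (hS : ∀ g, ∀ x ∈ S, C.act g x ∈ S) (i : Fin k)
    (a : ℤ) {x : M} (hx : x ∈ S) : C.periodic i a x ∈ S := by
  rcases Int.even_or_odd a with ha | ha
  · rw [C.periodic_of_even i ha]
    exact S.sum_mem fun t _ => hS _ x hx
  · rw [C.periodic_of_odd i ha]
    exact S.sub_mem (hS _ x hx) hx

end Periodic

theorem sum_sub_single (α : Fin k → ℤ) (i : Fin k) :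
    ∑ j, (α - Pi.single i 1 : Fin k → ℤ) j = ∑ j, α j - 1 := by
  simp [sum_sub_distrib]

theorem sum_Iio_sub_single (α : Fin k → ℤ) (i j : Fin k) :
    ∑ l ∈ Iio j, (α - Pi.single i 1 : Fin k → ℤ) l = ∑ l ∈ Iio j, α l - if i < j then 1 else 0 := by
  simp [sum_sub_distrib]

section Total

variable [Fact p.Prime]

/-- The total differential on families indexed by multidegrees `α : ℤ ^ k`. Such a family stands for
the equivariant map from the tensor product of the `k` periodic resolutions that sends the basis
element of multidegree `α` to `y α`; it is a chain map, up to signs, where `total y` vanishes. -/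
def total : ((Fin k → ℤ) → M) →ₗ[ZMod p] ((Fin k → ℤ) → M) :=
  LinearMap.pi fun α =>
    (-1 : ZMod p) ^ (∑ i, α i) • C.d ∘ₗ LinearMap.proj α +
      ∑ i, (-1 : ZMod p) ^ (∑ j ∈ Iio i, α j) •
        C.periodic i (α i) ∘ₗ LinearMap.proj (α - Pi.single i 1)

theorem total_apply (y : (Fin k → ℤ) → M) (α : Fin k → ℤ) :
    C.total y α = (-1 : ZMod p) ^ (∑ i, α i) • C.d (y α) +
      ∑ i, (-1 : ZMod p) ^ (∑ j ∈ Iio i, α j) • C.periodic i (α i) (y (α - Pi.single i 1)) := by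
  simp [total]

theorem sum_periodic_periodic (y : (Fin k → ℤ) → M) (α : Fin k → ℤ) :
    ∑ i, ∑ j, ((-1 : ZMod p) ^ (∑ l ∈ Iio i, α l) *
      (-1) ^ (∑ l ∈ Iio j, (α - Pi.single i 1 : Fin k → ℤ) l)) • C.periodic i (α i)
        (C.periodic j ((α - Pi.single i 1 : Fin k → ℤ) j) (y (α - Pi.single i 1 - Pi.single j 1))) =
      0 := by
  rw [← Finset.sum_product']
  refine Finset.sum_involution (fun x _ => (x.2, x.1)) ?_ ?_ (by simp) (by simp)
  · rintro ⟨i, j⟩ -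
    rcases eq_or_ne i j with rfl | hij
    · simp [C.periodic_periodic_sub_one]
    · simp only [sum_Iio_sub_single]
      simp only [Pi.sub_apply, Pi.single_eq_of_ne hij,
        Pi.single_eq_of_ne hij.symm, sub_zero]
      rw [C.periodic_comm j i, sub_right_comm α (Pi.single j 1), ← add_smul]
      rcases lt_or_gt_of_ne hij with h | h <;>
      · simp only [h, h.not_gt, if_true, if_false, sub_zero, neg_one_zpow_sub_one]
        ring_nf
        simp
  · rintro ⟨i, j⟩ - h hij
    obtain rfl : j = i := by simpa using congrArg Prod.fst hij
    simp [C.periodic_periodic_sub_one] at h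

theorem total_total (y : (Fin k → ℤ) → M) : C.total (C.total y) = 0 := by
  ext α
  rw [C.total_apply]
  simp only [C.total_apply y, map_add, map_smul, C.d_d, map_sum, smul_add, smul_zero, zero_add,
    sum_add_distrib, sum_sub_single, C.d_periodic, neg_one_zpow_sub_one, smul_sum, smul_smul]
  rw [C.sum_periodic_periodic, add_zero, ← sum_add_distrib, Pi.zero_apply]
  refine sum_eq_zero fun i _ => ?_
  rw [← add_smul]
  ring_nf
  simp

theorem total_smul_eq_zero {Θ : M} (hΘ : ∀ g, C.act g Θ = Θ) (hd : C.d Θ = 0)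
    (κ : (Fin k → ℤ) → ZMod p) : C.total (fun α => κ α • Θ) = 0 := by
  ext α
  simp [C.total_apply, hd, C.periodic_eq_zero_of_act_eq _ _ hΘ]

theorem total_single_zero {η : M} (hη : ∀ g, C.act g η = η) (hd : C.d η = 0) :
    C.total (Pi.single 0 η) = 0 := by
  convert C.total_smul_eq_zero hη hd (Pi.single 0 1) using 2
  ext α
  rcases eq_or_ne α 0 with rfl | hα <;> simp [*]

theorem map_total {M' : Type*} [AddCommGroup M'] [Module (ZMod p) M']
    (C' : EquivariantComplex p k M') (L : M →ₗ[ZMod p] M') {y : (Fin k → ℤ) → M}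
    (hd : ∀ α, L (C.d (y α)) = C'.d (L (y α)))
    (hact : ∀ g α, L (C.act g (y α)) = C'.act g (L (y α))) (α : Fin k → ℤ) :
    L (C.total y α) = C'.total (fun β => L (y β)) α := by
  simp [total_apply, hd, fun i a β => C.map_periodic (C' := C') (fun g => hact g β) i a]

theorem IsSubcomplex.total_mem {C : EquivariantComplex p k M} {S : Submodule (ZMod p) M}
    (hS : C.IsSubcomplex S) {y : (Fin k → ℤ) → M} (hy : ∀ α, y α ∈ S) (α : Fin k → ℤ) :
    C.total y α ∈ S := by
  rw [C.total_apply]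
  exact S.add_mem (S.smul_mem _ (hS.d_mem _ (hy _)))
    (S.sum_mem fun i _ => S.smul_mem _ (C.periodic_mem hS.act_mem i _ (hy _)))

theorem total_apply_of_forall_eq_zero {y : (Fin k → ℤ) → M} {α : Fin k → ℤ}
    (hy : ∀ i, y (α - Pi.single i 1) = 0) :
    C.total y α = (-1 : ZMod p) ^ (∑ i, α i) • C.d (y α) := by
  simp [C.total_apply, hy]

theorem d_eq_zero_of_total_eq_zero {y : (Fin k → ℤ) → M} {α : Fin k → ℤ}
    (hy : ∀ i, y (α - Pi.single i 1) = 0) (h : C.total y α = 0) : C.d (y α) = 0 := by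
  rw [C.total_apply_of_forall_eq_zero hy] at h
  exact (smul_eq_zero_iff_right (zpow_ne_zero _ (neg_ne_zero.2 one_ne_zero))).1 h

/-- The part of total degree `s` of a family, with the sign that cancels the one in `total`. -/
def homogeneous (p : ℕ) [Fact p.Prime] [Module (ZMod p) M] (s : ℤ) (w : (Fin k → ℤ) → M) :
    (Fin k → ℤ) → M :=
  fun α => if ∑ i, α i = s then (-1 : ZMod p) ^ s • w α else 0

theorem homogeneous_apply_of_ne {s : ℤ} {w : (Fin k → ℤ) → M} {α : Fin k → ℤ}
    (hα : ∑ i, α i ≠ s) : homogeneous p s w α = 0 :=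
  if_neg hα

theorem homogeneous_mem {S : Submodule (ZMod p) M} {s : ℤ} {w : (Fin k → ℤ) → M} {α : Fin k → ℤ}
    (hw : ∑ i, α i = s → w α ∈ S) : homogeneous p s w α ∈ S := by
  unfold homogeneous
  split_ifs with hα
  exacts [S.smul_mem _ (hw hα), S.zero_mem]

theorem total_homogeneous_of_lt {s : ℤ} (w : (Fin k → ℤ) → M) {α : Fin k → ℤ}
    (hα : ∑ i, α i < s) : C.total (homogeneous p s w) α = 0 := by
  rw [C.total_apply_of_forall_eq_zero, homogeneous_apply_of_ne hα.ne, map_zero, smul_zero]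
  exact fun i => homogeneous_apply_of_ne (by rw [sum_sub_single]; lia)

theorem total_homogeneous_of_eq {s : ℤ} (w : (Fin k → ℤ) → M) {α : Fin k → ℤ}
    (hα : ∑ i, α i = s) : C.total (homogeneous p s w) α = C.d (w α) := by
  rw [C.total_apply_of_forall_eq_zero, homogeneous, if_pos hα, hα, map_smul, smul_smul,
    neg_one_zpow_mul_self, one_smul]
  exact fun i => homogeneous_apply_of_ne (by rw [sum_sub_single]; lia)

end Total

section Obstruction

variable [Fact p.Prime] {C} {S : Submodule (ZMod p) M} {Θ : M} {n : Fin k → ℤ}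
  {y : (Fin k → ℤ) → M} {s : ℤ}

theorem sub_single_eq_zero_of_vanishing (hy : ∀ α ≤ n, ∑ i, α i < s → y α = 0) {α : Fin k → ℤ}
    (hαn : α ≤ n) (hα : ∑ i, α i ≤ s) (i : Fin k) : y (α - Pi.single i 1) = 0 :=
  hy _ ((sub_le_self _ (Pi.single_nonneg.2 zero_le_one)).trans hαn) (by rw [sum_sub_single]; lia)

theorem IsFundamentalCycle.exists_total_eq_vanishing_succ (hΘ : C.IsFundamentalCycle S Θ)
    (hS : C.IsSubcomplex S) (hyS : ∀ α, y α ∈ S) (hy : ∀ α ≤ n, ∑ i, α i = s → C.total y α = 0)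
    (hys : ∀ α ≤ n, ∑ i, α i < s → y α = 0) :
    ∃ z : (Fin k → ℤ) → M, (∀ α, z α ∈ S) ∧ C.total z = C.total y ∧
      ∀ α ≤ n, ∑ i, α i < s + 1 → z α = 0 := by
  have hdecomp : ∀ α, ∃ c : ZMod p, ∃ w ∈ S, α ≤ n → ∑ i, α i = s → y α = c • Θ + C.d w := by
    intro α
    by_cases hα : α ≤ n ∧ ∑ i, α i = s
    · obtain ⟨c, w, hw, h⟩ := hΘ.exists_eq_smul_add_d _ (hyS α) (C.d_eq_zero_of_total_eq_zero
        (sub_single_eq_zero_of_vanishing hys hα.1 hα.2.le) (hy α hα.1 hα.2))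
      exact ⟨c, w, hw, fun _ _ => h⟩
    · exact ⟨0, 0, S.zero_mem, fun h h' => absurd ⟨h, h'⟩ hα⟩
  choose c w hwS hw using hdecomp
  let κ : (Fin k → ℤ) → ZMod p := fun α => if ∑ i, α i = s then c α else 0
  refine ⟨y - C.total (homogeneous p s w) - fun α => κ α • Θ, fun α => ?_, ?_, fun α hαn hα => ?_⟩
  · exact S.sub_mem (S.sub_mem (hyS α) (hS.total_mem (fun β => homogeneous_mem fun _ => hwS β) α))
      (S.smul_mem _ hΘ.mem)
  · rw [map_sub, map_sub, C.total_total, C.total_smul_eq_zero hΘ.act_eq hΘ.d_eq_zero, sub_zero,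
      sub_zero]
  · rcases (Int.lt_add_one_iff.1 hα).lt_or_eq with hαs | hαs
    · simp [κ, hys α hαn hαs, C.total_homogeneous_of_lt w hαs, hαs.ne]
    · simp [κ, hw α hαn hαs, C.total_homogeneous_of_eq w hαs, hαs]

theorem IsFundamentalCycle.exists_total_eq_vanishing (hΘ : C.IsFundamentalCycle S Θ)
    (hS : C.IsSubcomplex S) (hyS : ∀ α, y α ∈ S) (hy0 : ∀ α, ∑ i, α i < 0 → y α = 0)
    (hy : ∀ α ≤ n, ∑ i, α i < ∑ i, n i → C.total y α = 0) (s : ℕ) (hs : s ≤ ∑ i, n i) :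
    ∃ z : (Fin k → ℤ) → M, (∀ α, z α ∈ S) ∧ C.total z = C.total y ∧
      ∀ α ≤ n, ∑ i, α i < s → z α = 0 := by
  induction s with
  | zero => exact ⟨y, hyS, rfl, fun α _ hα => hy0 α (by simpa using hα)⟩
  | succ s ih =>
    push_cast at hs ⊢
    obtain ⟨z, hzS, hzy, hz⟩ := ih (by lia)
    obtain ⟨z', hzS', hzz', hz'⟩ := hΘ.exists_total_eq_vanishing_succ hS hzS
      (fun α hαn hα => by rw [hzy, hy α hαn (by lia)]) hz
    exact ⟨z', hzS', hzz'.trans hzy, hz'⟩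

/-- Degree by degree, the bounding family `y` can be made to vanish below the total degree of `n`;
what is left of it then bounds in the complex itself. -/
theorem IsFundamentalCycle.eq_zero_of_total_eq_smul (hΘ : C.IsFundamentalCycle S Θ)
    (hS : C.IsSubcomplex S) (hn : 0 ≤ ∑ i, n i) (hyS : ∀ α, y α ∈ S)
    (hy0 : ∀ α, ∑ i, α i < 0 → y α = 0) (hy : ∀ α ≤ n, ∑ i, α i < ∑ i, n i → C.total y α = 0)
    {c : ZMod p} (hyn : C.total y n = c • Θ) : c = 0 := by
  obtain ⟨s, hs⟩ := Int.eq_ofNat_of_zero_le hn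
  obtain ⟨z, hzS, hzy, hz⟩ := hΘ.exists_total_eq_vanishing hS hyS hy0 hy s hs.ge
  refine hΘ.eq_zero_of_smul_eq_d c ((-1 : ZMod p) ^ (∑ i, n i) • z n) (S.smul_mem _ (hzS n)) ?_
  rw [← hyn, ← hzy, map_smul]
  exact C.total_apply_of_forall_eq_zero (sub_single_eq_zero_of_vanishing hz le_rfl hs.le)

end Obstruction

section AcyclicCarrier

variable [Fact p.Prime] {U : ℤ → Submodule (ZMod p) M} {h : ℤ → M →ₗ[ZMod p] M} {η : M}

/-- The families of chains of dimension at most `s - 1`, carried by `U`, that resolve `η` in total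
degrees below `s`. A chain of total degree `m` lies in `U (m + 1)` since `η` itself, the empty
simplex, lies in `U 0`. -/
structure IsPartialResolution (U : ℤ → Submodule (ZMod p) M) (η : M) (s : ℤ)
    (x : (Fin k → ℤ) → M) : Prop where
  mem : ∀ α, x α ∈ U (∑ i, α i + 1)
  eq_zero_of_neg : ∀ α, ∑ i, α i < 0 → x α = 0
  eq_zero_of_le : ∀ α, s ≤ ∑ i, α i → x α = 0
  total_eq : ∀ α, ∑ i, α i < s → C.total x α = (Pi.single 0 η : (Fin k → ℤ) → M) α

variable {C}

theorem IsPartialResolution.single_sub_total_mem {s : ℤ} {x : (Fin k → ℤ) → M}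
    (hx : C.IsPartialResolution U η s x) (hact : ∀ g, ∀ z ∈ U s, C.act g z ∈ U s) (hη : η ∈ U 0)
    {α : Fin k → ℤ} (hα : ∑ i, α i = s) :
    (Pi.single 0 η : (Fin k → ℤ) → M) α - C.total x α ∈ U s := by
  refine Submodule.sub_mem _ ?_ ?_
  · rcases eq_or_ne α 0 with rfl | h0
    · simpa [← hα] using hη
    · simp [h0]
  · rw [C.total_apply, hx.eq_zero_of_le α hα.ge, map_zero, smul_zero, zero_add]
    refine Submodule.sum_mem _ fun i _ => Submodule.smul_mem _ _ (C.periodic_mem hact i _ ?_)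
    have := hx.mem (α - Pi.single i 1)
    rwa [sum_sub_single, hα, sub_add_cancel] at this

theorem IsPartialResolution.exists_succ {s : ℤ} (hs : 0 ≤ s) {x : (Fin k → ℤ) → M}
    (hx : C.IsPartialResolution U η s x) (hd : ∀ z, C.d (h s z) = z - h s (C.d z))
    (hmem : ∀ z ∈ U s, h s z ∈ U (s + 1)) (hact : ∀ g, ∀ z ∈ U s, C.act g z ∈ U s)
    (hη : η ∈ U 0) (hfix : ∀ g, C.act g η = η) (hdη : C.d η = 0) :
    ∃ x', C.IsPartialResolution U η (s + 1) x' := by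
  let z : (Fin k → ℤ) → M := Pi.single 0 η - C.total x
  have hzd : ∀ α, ∑ i, α i = s → C.d (z α) = 0 := fun α hα => by
    refine C.d_eq_zero_of_total_eq_zero (fun i => sub_eq_zero.2 (hx.total_eq _ ?_).symm) ?_
    · rw [sum_sub_single]
      lia
    · simp [z, C.total_total, C.total_single_zero hfix hdη]
  refine ⟨x + homogeneous p s fun α => h s (z α), fun α => ?_, fun α hα => ?_, fun α hα => ?_,
    fun α hα => ?_⟩
  · refine Submodule.add_mem _ (hx.mem α) (homogeneous_mem fun hα => ?_)
    rw [hα]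
    exact hmem _ (hx.single_sub_total_mem hact hη hα)
  · rw [Pi.add_apply, hx.eq_zero_of_neg α hα, homogeneous_apply_of_ne (by lia), zero_add]
  · rw [Pi.add_apply, hx.eq_zero_of_le α (by lia), homogeneous_apply_of_ne (by lia), zero_add]
  · rw [map_add, Pi.add_apply]
    rcases (Int.lt_add_one_iff.1 hα).lt_or_eq with hαs | hαs
    · rw [hx.total_eq α hαs, C.total_homogeneous_of_lt _ hαs, add_zero]
    · rw [C.total_homogeneous_of_eq _ hαs, hd, hzd α hαs, map_zero, sub_zero]
      simp [z]

/-- The acyclic carrier method: the maps `h s` contract the carriers `U s`. -/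
theorem exists_isPartialResolution (N : ℕ) (hd : ∀ s z, C.d (h s z) = z - h s (C.d z))
    (hmem : ∀ s : ℤ, 0 ≤ s → s < N → ∀ z ∈ U s, h s z ∈ U (s + 1))
    (hact : ∀ s g, ∀ z ∈ U s, C.act g z ∈ U s) (hη : η ∈ U 0) (hfix : ∀ g, C.act g η = η)
    (hdη : C.d η = 0) : ∃ x, C.IsPartialResolution U η N x := by
  induction N with
  | zero =>
    refine ⟨0, fun α => Submodule.zero_mem _, fun _ _ => rfl, fun _ _ => rfl, fun α hα => ?_⟩
    have hα0 : α ≠ 0 := by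
      rintro rfl
      simp at hα
    simp [hα0]
  | succ N ih =>
    push_cast at hmem ⊢
    obtain ⟨x, hx⟩ := ih fun s hs hsN => hmem s hs (by lia)
    exact hx.exists_succ (Nat.cast_nonneg N) (hd N) (hmem N (Nat.cast_nonneg N) (by lia)) (hact N)
      hη hfix hdη

end AcyclicCarrier

end EquivariantComplex

/-! ### The exterior algebra on a set of vertices -/

/-- The exterior algebra with generators indexed by `V`. Its monomials are the oriented simplices
with vertices in `V`, so it is the augmented chain complex of the full simplex on `V`. -/
abbrev VertexAlgebra (F V : Type*) [CommRing F] : Type _ := ExteriorAlgebra F (V →₀ F)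

namespace VertexAlgebra

variable {F V : Type*} [CommRing F]

/-- The generator attached to a vertex. -/
noncomputable def vertex (v : V) : VertexAlgebra F V := ExteriorAlgebra.ι F (Finsupp.single v 1)

/-- Contraction with the coordinate functional of a vertex. -/
noncomputable def contract (v : V) : VertexAlgebra F V →ₗ[F] VertexAlgebra F V :=
  CliffordAlgebra.contractLeft (Q := (0 : QuadraticForm F (V →₀ F))) (Finsupp.lapply v)

/-- The (augmented) simplicial boundary operator. -/
noncomputable def boundary : VertexAlgebra F V →ₗ[F] VertexAlgebra F V :=
  CliffordAlgebra.contractLeft (Q := (0 : QuadraticForm F (V →₀ F)))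
    (Finsupp.linearCombination F fun _ => (1 : F))

theorem contract_vertex_mul [DecidableEq V] (v u : V) (x : VertexAlgebra F V) :
    contract v (vertex u * x) = (if u = v then x else 0) - vertex u * contract v x := by
  have h := CliffordAlgebra.contractLeft_ι_mul (Q := (0 : QuadraticForm F (V →₀ F)))
    (Finsupp.lapply v) (Finsupp.single u 1) x
  rw [contract, vertex]
  refine h.trans ?_
  simp only [Finsupp.lapply_apply, Finsupp.single_apply, ite_smul, one_smul, zero_smul]

theorem contract_vertex_mul_self (v : V) (x : VertexAlgebra F V) :
    contract v (vertex v * x) = x - vertex v * contract v x := by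
  classical simp [contract_vertex_mul]

theorem contract_vertex_mul_of_ne {v u : V} (h : u ≠ v) (x : VertexAlgebra F V) :
    contract v (vertex u * x) = -(vertex u * contract v x) := by
  classical simp [contract_vertex_mul, h]

theorem boundary_vertex_mul (u : V) (x : VertexAlgebra F V) :
    boundary (vertex u * x) = x - vertex u * boundary x := by
  have h := CliffordAlgebra.contractLeft_ι_mul (Q := (0 : QuadraticForm F (V →₀ F)))
    (Finsupp.linearCombination F fun _ => (1 : F)) (Finsupp.single u 1) x
  rw [boundary, vertex]
  refine h.trans ?_
  simp only [Finsupp.linearCombination_single, smul_eq_mul, mul_one, one_smul]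

@[simp] theorem contract_algebraMap (v : V) (c : F) :
    contract v (algebraMap F (VertexAlgebra F V) c) = 0 :=
  CliffordAlgebra.contractLeft_algebraMap ..

@[simp] theorem contract_one (v : V) : contract v (1 : VertexAlgebra F V) = 0 :=
  CliffordAlgebra.contractLeft_one ..

@[simp] theorem boundary_algebraMap (c : F) : boundary (algebraMap F (VertexAlgebra F V) c) = 0 :=
  CliffordAlgebra.contractLeft_algebraMap ..

@[simp] theorem boundary_one : boundary (1 : VertexAlgebra F V) = 0 :=
  CliffordAlgebra.contractLeft_one ..

@[simp] theorem boundary_boundary (x : VertexAlgebra F V) : boundary (boundary x) = 0 :=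
  CliffordAlgebra.contractLeft_contractLeft ..

@[simp] theorem contract_contract_self (v : V) (x : VertexAlgebra F V) :
    contract v (contract v x) = 0 :=
  CliffordAlgebra.contractLeft_contractLeft ..

theorem contract_comm (u v : V) (x : VertexAlgebra F V) :
    contract u (contract v x) = -contract v (contract u x) :=
  CliffordAlgebra.contractLeft_comm ..

theorem contract_boundary (v : V) (x : VertexAlgebra F V) :
    contract v (boundary x) = -boundary (contract v x) :=
  CliffordAlgebra.contractLeft_comm ..

theorem boundary_contract (v : V) (x : VertexAlgebra F V) :
    boundary (contract v x) = -contract v (boundary x) :=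
  CliffordAlgebra.contractLeft_comm ..

@[simp] theorem vertex_mul_self (v : V) : vertex v * vertex v = (0 : VertexAlgebra F V) :=
  ExteriorAlgebra.ι_sq_zero _

@[simp] theorem vertex_mul_vertex_mul_self (v : V) (x : VertexAlgebra F V) :
    vertex v * (vertex v * x) = 0 := by
  rw [← mul_assoc, vertex_mul_self, zero_mul]

theorem vertex_anticomm (u v : V) :
    (vertex u * vertex v : VertexAlgebra F V) = -(vertex v * vertex u) :=
  eq_neg_of_add_eq_zero_left (ExteriorAlgebra.ι_add_mul_swap _ _)

theorem contract_vertex [DecidableEq V] (v u : V) :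
    contract v (vertex u : VertexAlgebra F V) = if u = v then 1 else 0 := by
  have := contract_vertex_mul v u (1 : VertexAlgebra F V)
  simpa using this

@[simp] theorem boundary_vertex (u : V) : boundary (vertex u : VertexAlgebra F V) = 1 := by
  have := boundary_vertex_mul u (1 : VertexAlgebra F V)
  simpa using this

theorem induction_on_vertex {P : VertexAlgebra F V → Prop}
    (hc : ∀ c, P (algebraMap F _ c)) (hadd : ∀ x y, P x → P y → P (x + y))
    (hvertex : ∀ v x, P x → P (vertex v * x)) (x : VertexAlgebra F V) : P x := by
  suffices h : ∀ c : F, P (c • x) by simpa using h 1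
  induction x using CliffordAlgebra.left_induction with
  | algebraMap r => intro c; rw [Algebra.smul_def, ← map_mul]; exact hc _
  | add x y hx hy => intro c; rw [smul_add]; exact hadd _ _ (hx c) (hy c)
  | ι_mul x m hx =>
    induction m using Finsupp.induction_linear with
    | zero => intro c; simpa using hc 0
    | add f g hf hg =>
      intro c
      rw [map_add, add_mul, smul_add]
      exact hadd _ _ (hf c) (hg c)
    | single v a =>
      intro c
      have h : (Finsupp.single v a : V →₀ F) = a • Finsupp.single v 1 := by simp
      rw [h, map_smul, smul_mul_assoc, smul_smul, ← mul_smul_comm]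
      exact hvertex v _ (hx _)

/-- The algebra endomorphism induced by a map of vertices. -/
noncomputable def map (σ : V → V) : VertexAlgebra F V →ₐ[F] VertexAlgebra F V :=
  ExteriorAlgebra.map (Finsupp.lmapDomain F F σ)

@[simp] theorem map_vertex (σ : V → V) (v : V) :
    map σ (vertex v : VertexAlgebra F V) = vertex (σ v) := by
  simp [map, vertex, ExteriorAlgebra.map_apply_ι]

theorem map_id (x : VertexAlgebra F V) : map id x = x := by
  induction x using induction_on_vertex with
  | hc c => simp
  | hadd x y hx hy => simp [hx, hy]
  | hvertex v x hx => simp [hx]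

theorem map_comp (σ τ : V → V) (x : VertexAlgebra F V) :
    map (σ ∘ τ) x = map σ (map τ x) := by
  induction x using induction_on_vertex with
  | hc c => simp
  | hadd x y hx hy => simp [hx, hy]
  | hvertex v x hx => simp [hx]

theorem boundary_map (σ : V → V) (x : VertexAlgebra F V) :
    boundary (map σ x) = map σ (boundary x) := by
  induction x using induction_on_vertex with
  | hc c => simp
  | hadd x y hx hy => simp [hx, hy]
  | hvertex v x hx => simp [hx, boundary_vertex_mul]

theorem contract_map {σ : V → V} (hσ : σ.Injective) (v : V) (x : VertexAlgebra F V) :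
    contract (σ v) (map σ x) = map σ (contract v x) := by
  classical
  induction x using induction_on_vertex with
  | hc c => simp
  | hadd x y hx hy => simp [hx, hy]
  | hvertex u x hx =>
    simp only [map_mul, map_vertex, contract_vertex_mul, hx, hσ.eq_iff, map_sub]
    split_ifs <;> simp

theorem commute_of_vertex {w : VertexAlgebra F V} (h : ∀ v, Commute w (vertex v))
    (x : VertexAlgebra F V) :
    Commute w x := by
  induction x using induction_on_vertex with
  | hc c => exact Algebra.commutes c w |>.symm
  | hadd x y hx hy => exact hx.add_right hy
  | hvertex v x hx => exact (h v).mul_right hx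

theorem commute_vertex_mul_vertex (u v : V) (x : VertexAlgebra F V) :
    Commute (vertex u * vertex v) x := by
  refine commute_of_vertex (fun t => ?_) x
  rw [commute_iff_eq, mul_assoc, vertex_anticomm v t, mul_neg, ← mul_assoc, vertex_anticomm u t,
    neg_mul,
    neg_neg, mul_assoc]

/-! ### Iterated contractions -/

/-- Contraction with all the vertices of a list, the last one first. -/
noncomputable def contractList : List V → VertexAlgebra F V →ₗ[F] VertexAlgebra F V
  | [] => LinearMap.id
  | v :: l => contract v ∘ₗ contractList l

@[simp] theorem contractList_nil (x : VertexAlgebra F V) : contractList [] x = x := rfl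

@[simp] theorem contractList_cons (v : V) (l : List V) (x : VertexAlgebra F V) :
    contractList (v :: l) x = contract v (contractList l x) := rfl

theorem contractList_append (l l' : List V) (x : VertexAlgebra F V) :
    contractList (l ++ l') x = contractList l (contractList l' x) := by
  induction l with
  | nil => rfl
  | cons v l ih => simp [ih]

theorem contractList_contract (l : List V) (v : V) (x : VertexAlgebra F V) :
    contractList l (contract v x) = (-1 : F) ^ l.length • contract v (contractList l x) := by
  induction l with
  | nil => simp
  | cons u l ih => simp [ih, contract_comm u v, pow_succ]

theorem contractList_boundary (l : List V) (x : VertexAlgebra F V) :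
    contractList l (boundary x) = (-1 : F) ^ l.length • boundary (contractList l x) := by
  induction l with
  | nil => simp
  | cons u l ih => simp [ih, contract_boundary u, pow_succ]

theorem contractList_vertex_mul {l : List V} {u : V} (hu : u ∉ l) (x : VertexAlgebra F V) :
    contractList l (vertex u * x) = (-1 : F) ^ l.length • (vertex u * contractList l x) := by
  induction l with
  | nil => simp
  | cons v l ih =>
    simp only [List.mem_cons, not_or] at hu
    simp [ih hu.2, contract_vertex_mul_of_ne hu.1, pow_succ]

theorem contractList_eq_zero_of_contract {l : List V} {v : V} (hv : v ∈ l) {x : VertexAlgebra F V}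
    (hx : contract v x = 0) : contractList l x = 0 := by
  induction l with
  | nil => simp at hv
  | cons u l ih =>
    rcases List.mem_cons.1 hv with rfl | h
    · have := contractList_contract l v x
      rw [hx, map_zero] at this
      have h2 := congrArg (fun y => (-1 : F) ^ l.length • y) this
      simpa [smul_smul, ← mul_pow] using h2.symm
    · simp [ih h]

theorem contract_contractList_of_mem {l : List V} {v : V} (hv : v ∈ l) (x : VertexAlgebra F V) :
    contract v (contractList l x) = 0 := by
  have h := contractList_contract l v x
  rw [contractList_eq_zero_of_contract hv (contract_contract_self v x)] at h
  have h2 := congrArg (fun y => (-1 : F) ^ l.length • y) h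
  simpa [smul_smul, ← mul_pow] using h2.symm

theorem contractList_eq_zero_of_perm {l l' : List V} (h : l.Perm l') {x : VertexAlgebra F V}
    (hx : contractList l x = 0) :
    contractList l' x = 0 := by
  suffices H : contractList l' x = contractList l x ∨ contractList l' x = -contractList l x by
    rcases H with H | H <;> simp [H, hx]
  clear hx
  induction h with
  | nil => simp
  | cons v _ ih => rcases ih with ih | ih <;> simp [ih]
  | swap u v l => right; simp [contract_comm u v]
  | trans _ _ ih ih' => rcases ih with ih | ih <;> rcases ih' with ih' | ih' <;> simp [ih, ih']

theorem contractList_map {σ : V → V} (hσ : σ.Injective) (l : List V) (x : VertexAlgebra F V) :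
    contractList (l.map σ) (map σ x) = map σ (contractList l x) := by
  induction l with
  | nil => rfl
  | cons v l ih => simp [ih, contract_map hσ]

/-- The algebra endomorphism that sets the vertices of a finite set to zero. -/
noncomputable def erase [DecidableEq V] (s : Finset V) :
    VertexAlgebra F V →ₐ[F] VertexAlgebra F V :=
  ExteriorAlgebra.map
    (Finsupp.linearCombination F fun v => if v ∈ s then 0 else Finsupp.single v (1 : F))

theorem erase_vertex [DecidableEq V] (s : Finset V) (v : V) :
    erase s (vertex v : VertexAlgebra F V) = if v ∈ s then 0 else vertex v := by
  rw [erase, vertex, ExteriorAlgebra.map_apply_ι]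
  split_ifs with h <;> simp [h]

theorem erase_insert [DecidableEq V] (s : Finset V) (v : V) (x : VertexAlgebra F V) :
    erase (insert v s) x = contract v (vertex v * erase s x) := by
  induction x using induction_on_vertex with
  | hc c => simp [contract_vertex_mul_self]
  | hadd x y hx hy => simp [hx, hy, mul_add]
  | hvertex u x hx =>
    rw [map_mul (erase _), map_mul (erase _), erase_vertex, erase_vertex, hx]
    obtain rfl | huv := eq_or_ne u v
    · by_cases hus : u ∈ s <;> simp [hus]
    · by_cases hus : u ∈ s
      · simp [hus]
      · rw [if_neg (by simp [huv, hus]), if_neg hus, ← mul_assoc (vertex v), vertex_anticomm,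
          neg_mul, mul_assoc, map_neg, contract_vertex_mul_of_ne huv, neg_neg]

theorem erase_empty [DecidableEq V] (x : VertexAlgebra F V) : erase ∅ x = x := by
  induction x using induction_on_vertex with
  | hc c => simp
  | hadd x y hx hy => simp [hx, hy]
  | hvertex u x hx => simp [hx, erase_vertex]

theorem erase_eq_self_of_contract_eq_zero [DecidableEq V] {x : VertexAlgebra F V}
    (hx : ∀ v, contract v x = 0) (s : Finset V) : erase s x = x := by
  induction s using Finset.induction_on with
  | empty => exact erase_empty x
  | insert v s _ ih => rw [erase_insert, ih, contract_vertex_mul_self, hx, mul_zero, sub_zero]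

theorem exists_erase_eq_algebraMap [DecidableEq V] (x : VertexAlgebra F V) :
    ∃ (c : F) (s : Finset V), ∀ t, s ⊆ t → erase t x = algebraMap F _ c := by
  induction x using induction_on_vertex with
  | hc c => exact ⟨c, ∅, by simp⟩
  | hadd x y hx hy =>
    obtain ⟨c, s, hs⟩ := hx
    obtain ⟨c', s', hs'⟩ := hy
    refine ⟨c + c', s ∪ s', fun t ht => ?_⟩
    rw [map_add, map_add, hs t (union_subset_left ht), hs' t (union_subset_right ht)]
  | hvertex v x _ =>
    refine ⟨0, {v}, fun t ht => ?_⟩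
    rw [map_mul, erase_vertex, if_pos (singleton_subset_iff.1 ht), zero_mul, map_zero]

theorem exists_eq_algebraMap_of_contract_eq_zero {x : VertexAlgebra F V}
    (hx : ∀ v, contract v x = 0) : ∃ c : F, x = algebraMap F _ c := by
  classical
  obtain ⟨c, s, hs⟩ := exists_erase_eq_algebraMap x
  exact ⟨c, (erase_eq_self_of_contract_eq_zero hx s).symm.trans (hs s subset_rfl)⟩

theorem contractList_eq_zero_of_subset {l l' : List V} (hl : l.Nodup) (h : l ⊆ l')
    {x : VertexAlgebra F V} (hx : contractList l x = 0) : contractList l' x = 0 := by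
  obtain ⟨l₁, h₁, h₂⟩ := List.subperm_of_subset hl h
  obtain ⟨r, hr⟩ := h₂.exists_perm_append
  refine contractList_eq_zero_of_perm
    ((hr.trans ((h₁.append_right r).trans List.perm_append_comm)).symm) ?_
  rw [contractList_append, hx, map_zero]

/-! ### Acyclicity of joins of boundaries of simplices -/

section Acyclic

/-- The vertices of a list of blocks. A block is encoded as a pair so as to be nonempty. -/
def blockVertices (L : List (V × List V)) : List V := L.flatMap fun b => b.1 :: b.2

/-- The chain lives on the vertices of the blocks and none of its simplices contains a full block.
Such chains form the join of the boundaries of the simplices spanned by the blocks. -/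
structure IsDeletedChain (L : List (V × List V)) (z : VertexAlgebra F V) : Prop where
  contract_eq_zero : ∀ v ∉ blockVertices L, contract v z = 0
  contractList_eq_zero : ∀ b ∈ L, contractList (b.1 :: b.2) z = 0

variable {L : List (V × List V)} {t : List V} {u v : V} {w z : VertexAlgebra F V}

theorem blockVertices_cons (b : V × List V) (L : List (V × List V)) :
    blockVertices (b :: L) = b.1 :: (b.2 ++ blockVertices L) := rfl

theorem isDeletedChain_nil_cons (hv : v ∉ blockVertices L) :
    IsDeletedChain ((v, []) :: L) z ↔ IsDeletedChain L z := by
  constructor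
  · intro hz
    obtain ⟨hzv, hzL⟩ := List.forall_mem_cons.1 hz.contractList_eq_zero
    refine ⟨fun x hx => ?_, hzL⟩
    obtain rfl | hxv := eq_or_ne x v
    · exact hzv
    · exact hz.contract_eq_zero x (by simp [blockVertices_cons, hxv, hx])
  · intro hz
    refine ⟨fun x hx => hz.contract_eq_zero x fun h => hx ?_,
      List.forall_mem_cons.2 ⟨hz.contract_eq_zero v hv, hz.contractList_eq_zero⟩⟩
    simp [blockVertices_cons, h]

theorem IsDeletedChain.contract_head (hz : IsDeletedChain ((v, u :: t) :: L) z) :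
    IsDeletedChain ((v, t) :: L) (contract u z) := by
  refine ⟨fun x hx => ?_, List.forall_mem_cons.2 ⟨?_, fun b hb => ?_⟩⟩
  · obtain rfl | hxu := eq_or_ne x u
    · exact contract_contract_self x z
    · have hxz : contract x z = 0 := hz.contract_eq_zero x fun h => hx (by
        simp only [blockVertices_cons, List.cons_append, List.mem_cons, hxu, false_or] at h ⊢
        exact h)
      rw [contract_comm, hxz, map_zero, neg_zero]
  · have hvt : contractList (v :: u :: t) z = 0 :=
      hz.contractList_eq_zero (v, u :: t) List.mem_cons_self
    have := contractList_eq_zero_of_perm ((List.perm_append_singleton u t).symm.cons v) hvt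
    rwa [← List.cons_append, contractList_append] at this
  · rw [contractList_contract, hz.contractList_eq_zero b (List.mem_cons_of_mem _ hb), map_zero,
      smul_zero]

theorem boundary_cone_sub (u v : V) (hz : boundary z = 0) (hw : boundary w = contract u z) :
    boundary (vertex v * (z - vertex u * contract u z + w) - vertex u * w) = z := by
  simp only [map_sub, map_add, boundary_vertex_mul, boundary_contract, hz, hw, map_zero, neg_zero,
    mul_zero, sub_zero, zero_sub, neg_add_cancel]
  abel

theorem IsDeletedChain.cone_sub (hnd : (blockVertices ((v, u :: t) :: L)).Nodup)
    (hz : IsDeletedChain ((v, u :: t) :: L) z) (hw : IsDeletedChain ((v, t) :: L) w) :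
    IsDeletedChain ((v, u :: t) :: L)
      (vertex v * (z - vertex u * contract u z + w) - vertex u * w) := by
  simp only [blockVertices_cons, List.cons_append, List.nodup_cons, List.mem_cons, not_or,
    List.mem_append] at hnd
  obtain ⟨⟨hvu, -, hvL⟩, ⟨hut, huL⟩, -⟩ := hnd
  have huw : contract u w = 0 :=
    hw.contract_eq_zero u (by simp [blockVertices_cons, Ne.symm hvu, hut, huL])
  refine ⟨fun x hx => ?_, List.forall_mem_cons.2 ⟨?_, fun b hb => ?_⟩⟩
  · have hxz := hz.contract_eq_zero x hx
    simp only [blockVertices_cons, List.cons_append, List.mem_cons, not_or] at hx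
    obtain ⟨hxv, hxu, hxt⟩ := hx
    have hxw := hw.contract_eq_zero x (by simpa [blockVertices_cons, hxv] using hxt)
    simp [contract_vertex_mul_of_ne (Ne.symm hxv), contract_vertex_mul_of_ne (Ne.symm hxu), hxw,
      hxz, contract_comm x u]
  · have huq : contract u (vertex v * (z - vertex u * contract u z + w))
        = 0 := by
      simp [contract_vertex_mul_of_ne hvu, contract_vertex_mul_self, huw]
    have hvtw : contractList (v :: t) (vertex u * w) = 0 := by
      rw [contractList_vertex_mul (by simp [Ne.symm hvu, hut]),
        hw.contractList_eq_zero (v, t) List.mem_cons_self, mul_zero, smul_zero]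
    rw [map_sub, contractList_eq_zero_of_contract (v := u) (by simp) huq, zero_sub, neg_eq_zero]
    refine contractList_eq_zero_of_perm (List.Perm.swap v u t) ?_
    rw [contractList_cons, hvtw, map_zero]
  · have hvb : v ∉ b.1 :: b.2 := fun h => hvL (List.mem_flatMap.2 ⟨b, hb, h⟩)
    have hub : u ∉ b.1 :: b.2 := fun h => huL (List.mem_flatMap.2 ⟨b, hb, h⟩)
    have hzb := hz.contractList_eq_zero b (List.mem_cons_of_mem _ hb)
    have hwb := hw.contractList_eq_zero b (List.mem_cons_of_mem _ hb)
    simp only [map_sub, map_add, contractList_vertex_mul hvb, contractList_vertex_mul hub,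
      contractList_contract, hzb, hwb, map_zero, smul_zero, mul_zero, sub_zero, add_zero]

-- Splitting off `u` from `z` leaves a cycle once `w`, which bounds the link of `u`, is added; the
-- cone with apex `v` over that cycle cannot fill the block of `v`, as it does not involve `u`.
theorem IsDeletedChain.exists_boundary_eq (hL : (blockVertices L).Nodup) (hz : IsDeletedChain L z)
    (hdz : boundary z = 0) (htop : contractList (L.flatMap Prod.snd) z = 0) :
    ∃ w : VertexAlgebra F V, IsDeletedChain L w ∧ boundary w = z := by
  induction L generalizing z with
  | nil => exact ⟨0, ⟨by simp, by simp⟩, by simpa using htop.symm⟩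
  | cons b L ih =>
    obtain ⟨v, t⟩ := b
    induction t generalizing z with
    | nil =>
      obtain ⟨hv, hnd⟩ := List.nodup_cons.1 hL
      obtain ⟨w, hw, hdw⟩ := ih hnd ((isDeletedChain_nil_cons hv).1 hz) hdz htop
      exact ⟨w, (isDeletedChain_nil_cons hv).2 hw, hdw⟩
    | cons u t iht =>
      have htop' : contractList (((v, t) :: L).flatMap Prod.snd) (contract u z) = 0 := by
        have := contractList_eq_zero_of_perm (List.perm_append_singleton u
          (t ++ L.flatMap Prod.snd)).symm htop
        simpa [contractList_append] using this
      have hnd : (blockVertices ((v, t) :: L)).Nodup :=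
        hL.sublist (((List.sublist_cons_self u _)).cons_cons v)
      obtain ⟨w, hw, hdw⟩ := iht (by rw [boundary_contract, hdz, map_zero, neg_zero]) hnd
        hz.contract_head htop'
      exact ⟨_, hz.cone_sub hL hw, boundary_cone_sub u v hdz hdw⟩

end Acyclic

section Lines

variable {p : ℕ} {B : Type*}

/-- The vertices of a line, other than the base vertex. -/
def lineTail (p : ℕ) (b : B) : List (B × ZMod p) :=
  (List.range (p - 1)).map fun t => (b, ((t + 1 : ℕ) : ZMod p))

/-- The vertices of a line. -/
def line (p : ℕ) (b : B) : List (B × ZMod p) := (b, 0) :: lineTail p b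

theorem line_eq [NeZero p] (b : B) :
    line p b = (List.range p).map fun t : ℕ => (b, (t : ZMod p)) := by
  have h : List.range p = List.range (p - 1 + 1) := by
    rw [Nat.sub_add_cancel (NeZero.pos p)]
  rw [h, List.range_succ_eq_map]
  simp [line, lineTail, Function.comp_def]

theorem mem_line [NeZero p] (b : B) (v : B × ZMod p) : v ∈ line p b ↔ v.1 = b := by
  rw [line_eq]
  constructor
  · simp only [List.mem_map]
    rintro ⟨t, -, rfl⟩; rfl
  · rintro rfl
    exact List.mem_map.2 ⟨v.2.val, List.mem_range.2 v.2.val_lt, by simp⟩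

theorem nodup_line [NeZero p] (b : B) : (line p b).Nodup := by
  rw [line_eq]
  refine List.Nodup.map_on (fun x hx y hy h => ?_) List.nodup_range
  have := congrArg (fun v => ZMod.val (Prod.snd v)) h
  simpa [ZMod.val_cast_of_lt (List.mem_range.1 hx), ZMod.val_cast_of_lt (List.mem_range.1 hy)]
    using this

/-- The chains none of whose simplices contains a full line. -/
noncomputable def deleted (p : ℕ) (B : Type*) :
    Submodule (ZMod p) (VertexAlgebra (ZMod p) (B × ZMod p)) :=
  ⨅ b : B, LinearMap.ker (contractList (line p b))

theorem mem_deleted {z : VertexAlgebra (ZMod p) (B × ZMod p)} :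
    z ∈ deleted p B ↔ ∀ b, contractList (line p b) z = 0 := by
  simp [deleted]

theorem boundary_mem_deleted {z : VertexAlgebra (ZMod p) (B × ZMod p)} (hz : z ∈ deleted p B) :
    boundary z ∈ deleted p B := by
  rw [mem_deleted] at hz ⊢
  intro b
  rw [contractList_boundary, hz b]; simp

theorem map_mem_deleted [NeZero p] {σ : B × ZMod p → B × ZMod p} (hσ : σ.Injective)
    (hline : ∀ b, ∃ b', ∀ a, (σ (b', a)).1 = b) {z : VertexAlgebra (ZMod p) (B × ZMod p)}
    (hz : z ∈ deleted p B) : map σ z ∈ deleted p B := by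
  rw [mem_deleted] at hz ⊢
  intro b
  obtain ⟨b', hb'⟩ := hline b
  refine contractList_eq_zero_of_subset (l := (line p b').map σ) ((nodup_line b').map hσ) ?_ ?_
  · intro v hv
    obtain ⟨u, hu, rfl⟩ := List.mem_map.1 hv
    rw [mem_line] at hu ⊢
    subst hu
    exact hb' u.2
  · rw [contractList_map hσ, hz]; simp

variable [Fintype B]

/-- The vertices of all the lines, other than the base vertices. -/
noncomputable def allTails (p : ℕ) (B : Type*) [Fintype B] : List (B × ZMod p) :=
  (univ : Finset B).toList.flatMap (lineTail p)

theorem exists_contractList_allTails [NeZero p] {z : VertexAlgebra (ZMod p) (B × ZMod p)}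
    (hz : z ∈ deleted p B) :
    ∃ c : ZMod p, contractList (allTails p B) z = algebraMap (ZMod p) _ c := by
  refine exists_eq_algebraMap_of_contract_eq_zero fun v => ?_
  by_cases hv : v ∈ allTails p B
  · exact contract_contractList_of_mem hv z
  have hv0 : v = (v.1, 0) := by
    by_contra h
    refine hv (List.mem_flatMap.2 ⟨v.1, by simp, ?_⟩)
    exact ((List.mem_cons.1 ((mem_line v.1 v).2 rfl)).resolve_left h)
  have : contractList (v :: allTails p B) z = 0 := by
    refine contractList_eq_zero_of_subset (nodup_line v.1) ?_ (mem_deleted.1 hz v.1)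
    rw [line, ← hv0]
    exact List.cons_subset_cons _ fun u hu => List.mem_flatMap.2 ⟨v.1, by simp, hu⟩
  exact this

theorem exists_mem_deleted_boundary_eq [NeZero p]
    {z : VertexAlgebra (ZMod p) (B × ZMod p)}
    (hz : z ∈ deleted p B) (hdz : boundary z = 0) (htop : contractList (allTails p B) z = 0) :
    ∃ w ∈ deleted p B, boundary w = z := by
  classical
  let L := (univ : Finset B).toList.map fun b => ((b, (0 : ZMod p)), lineTail p b)
  have hL : blockVertices L = (univ : Finset B).toList.flatMap (line p) := List.flatMap_map ..
  have hmem : ∀ v, v ∈ blockVertices L := fun v => by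
    rw [hL]
    exact List.mem_flatMap.2 ⟨v.1, by simp, (mem_line v.1 v).2 rfl⟩
  have hnodup : (blockVertices L).Nodup := by
    rw [hL]
    refine List.nodup_flatMap.2 ⟨fun b _ => nodup_line b, ?_⟩
    refine (Finset.nodup_toList _).imp fun {b b'} h v hv hv' => ?_
    exact h (((mem_line b v).1 hv).symm.trans ((mem_line b' v).1 hv'))
  have hzL : IsDeletedChain L z :=
    ⟨fun v hv => absurd (hmem v) hv, List.forall_mem_map.2 fun b _ => mem_deleted.1 hz b⟩
  obtain ⟨w, hw, hdw⟩ := hzL.exists_boundary_eq hnodup hdz (by rw [List.flatMap_map]; exact htop)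
  exact ⟨w, mem_deleted.2 fun b => hw.contractList_eq_zero ((b, 0), lineTail p b)
    (List.mem_map.2 ⟨b, by simp, rfl⟩), hdw⟩

theorem exists_eq_smul_add_boundary [Fact p.Prime] {Θ : VertexAlgebra (ZMod p) (B × ZMod p)}
    (hΘ : Θ ∈ deleted p B) (hdΘ : boundary Θ = 0) {κ : ZMod p} (hκ : κ ≠ 0)
    (hΘκ : contractList (allTails p B) Θ = algebraMap (ZMod p) _ κ)
    {z : VertexAlgebra (ZMod p) (B × ZMod p)} (hz : z ∈ deleted p B)
    (hdz : boundary z = 0) :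
    ∃ c : ZMod p, ∃ w ∈ deleted p B, z = c • Θ + boundary w := by
  obtain ⟨c, hc⟩ := exists_contractList_allTails hz
  obtain ⟨w, hw, hdw⟩ := exists_mem_deleted_boundary_eq (z := z - (c / κ) • Θ)
    (Submodule.sub_mem _ hz (Submodule.smul_mem _ _ hΘ)) (by simp [hdz, hdΘ]) (by
      rw [map_sub, map_smul, hc, hΘκ, Algebra.smul_def, ← map_mul, div_mul_cancel₀ c hκ, sub_self])
  exact ⟨c / κ, w, hw, by rw [hdw]; abel⟩

theorem eq_zero_of_smul_eq_boundary [Fact p.Prime] {Θ : VertexAlgebra (ZMod p) (B × ZMod p)}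
    {κ : ZMod p} (hκ : κ ≠ 0) (hΘκ : contractList (allTails p B) Θ = algebraMap (ZMod p) _ κ)
      (c : ZMod p)
    {w : VertexAlgebra (ZMod p) (B × ZMod p)} (hw : w ∈ deleted p B)
    (h : c • Θ = boundary w) : c = 0 := by
  obtain ⟨e, he⟩ := exists_contractList_allTails hw
  have h1 := congrArg (contractList (allTails p B)) h
  rw [contractList_boundary, he, map_smul, hΘκ, boundary_algebraMap, smul_zero, Algebra.smul_def,
    ← map_mul, ← map_zero (algebraMap (ZMod p) (VertexAlgebra (ZMod p) (B × ZMod p))),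
    ExteriorAlgebra.algebraMap_inj] at h1
  exact (mul_eq_zero.1 h1).resolve_right hκ

end Lines

section Prod

theorem list_prod_mul_vertex (l : List V) (v : V) :
    ((l.map vertex).prod * vertex v : VertexAlgebra F V) =
      (-1 : F) ^ l.length • (vertex v * (l.map vertex).prod) := by
  induction l with
  | nil => simp
  | cons u l ih =>
    simp only [List.map_cons, List.prod_cons, mul_assoc, ih, List.length_cons]
    rw [mul_smul_comm, ← mul_assoc, vertex_anticomm, neg_mul, mul_assoc, smul_neg, pow_succ,
      mul_neg_one, neg_smul]

theorem list_prod_mul_vertex_of_mem {l : List V} {v : V} (hv : v ∈ l) :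
    (l.map vertex).prod * vertex v = (0 : VertexAlgebra F V) := by
  induction l with
  | nil => simp at hv
  | cons u l ih =>
    rcases List.mem_cons.1 hv with rfl | h
    · rw [list_prod_mul_vertex, List.map_cons, List.prod_cons, vertex_mul_vertex_mul_self,
      smul_zero]
    · rw [List.map_cons, List.prod_cons, mul_assoc, ih h, mul_zero]

theorem contract_list_prod {l : List V} {v : V} (hv : v ∉ l) :
    contract v (l.map vertex).prod = (0 : VertexAlgebra F V) := by
  induction l with
  | nil => simp
  | cons u l ih =>
    simp only [List.mem_cons, not_or] at hv
    rw [List.map_cons, List.prod_cons, contract_vertex_mul_of_ne (Ne.symm hv.1), ih hv.2, mul_zero,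
      neg_zero]

theorem contractList_list_prod {l : List V} (hl : l.Nodup) :
    ∃ e : ℕ, contractList l (l.map vertex).prod = (-1 : F) ^ e • (1 : VertexAlgebra F V) := by
  induction l with
  | nil => exact ⟨0, by simp⟩
  | cons v l ih =>
    rw [List.nodup_cons] at hl
    obtain ⟨e, he⟩ := ih hl.2
    refine ⟨l.length + e, ?_⟩
    rw [contractList_cons, List.map_cons, List.prod_cons, contractList_vertex_mul hl.1, he,
      map_smul, mul_smul_comm,
      mul_one, map_smul, smul_smul, pow_add]
    classical rw [contract_vertex, if_pos rfl]

theorem add_pow_of_mul_self_eq_zero {R : Type*} [Ring R] {a x : R} (h : Commute a x)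
    (hx : x * x = 0) (n : ℕ) : (a + x) ^ (n + 1) = a ^ (n + 1) + (n + 1 : ℕ) • (a ^ n * x) := by
  induction n with
  | zero => simp
  | succ n ih =>
    have h1 : a ^ n * x * a = a ^ (n + 1) * x := by
      rw [mul_assoc, ← h.eq, ← mul_assoc, pow_succ]
    have h2 : a ^ n * x * x = 0 := by rw [mul_assoc, hx, mul_zero]
    rw [pow_succ (a + x), ih, mul_add, add_mul, add_mul, smul_mul_assoc, smul_mul_assoc, h1, h2,
      smul_zero, add_zero, ← pow_succ, add_assoc, add_comm (_ • _), succ_nsmul' _ (n + 1)]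

/-- The sum of the first `n` edges of a path of vertices. -/
noncomputable def pathForm (v : ℕ → V) (n : ℕ) : VertexAlgebra F V :=
  ∑ j ∈ range n, vertex (v j) * vertex (v (j + 1))

theorem commute_pathForm (v : ℕ → V) (n : ℕ) (x : VertexAlgebra F V) :
    Commute (pathForm v n) x :=
  Commute.sum_left _ _ _ fun _ _ => commute_vertex_mul_vertex _ _ x

theorem pathForm_succ (v : ℕ → V) (n : ℕ) :
    (pathForm v (n + 1) : VertexAlgebra F V) =
      pathForm v n + vertex (v n) * vertex (v (n + 1)) := by
  rw [pathForm, sum_range_succ, pathForm]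

theorem vertex_mul_vertex_add_mul_self (u v w : V) :
    ((vertex u * vertex v + vertex v * vertex w) * (vertex u * vertex v + vertex v * vertex w) :
      VertexAlgebra F V) = 0 := by
  set x : VertexAlgebra F V := vertex u * vertex v + vertex v * vertex w with hx
  have hxv : x = vertex v * (vertex w - vertex u) := by
    rw [hx, vertex_anticomm, mul_sub]
    abel
  have hc : Commute x (vertex v) :=
    (commute_vertex_mul_vertex _ _ _).add_left (commute_vertex_mul_vertex _ _ _)
  nth_rw 2 [hxv]
  rw [← mul_assoc, hc.eq, hxv, vertex_mul_vertex_mul_self, zero_mul]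

theorem list_prod_mul_pathForm {l : List V} {v : ℕ → V} {n : ℕ} (hl : ∀ j < n, v j ∈ l) :
    ((l.map vertex).prod * pathForm v n : VertexAlgebra F V) = 0 := by
  rw [pathForm, mul_sum]
  refine sum_eq_zero fun j hj => ?_
  rw [← mul_assoc, list_prod_mul_vertex_of_mem (hl j (Finset.mem_range.1 hj)), zero_mul]

theorem vertex_mul_pathForm_pow (v : ℕ → V) (m : ℕ) :
    (vertex (v 0) * pathForm v (2 * m) ^ m : VertexAlgebra F V) =
      (m.factorial : F) • (((List.range (2 * m + 1)).map v).map vertex).prod := by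
  induction m with
  | zero => simp
  | succ m ih =>
    set P : VertexAlgebra F V := pathForm v (2 * m)
    set l : List V := (List.range (2 * m + 1)).map v with hl
    set x : VertexAlgebra F V := vertex (v (2 * m)) * vertex (v (2 * m + 1)) +
      vertex (v (2 * m + 1)) * vertex (v (2 * m + 2)) with hx
    have hP : pathForm v (2 * (m + 1)) = P + x := by
      rw [mul_add_one, pathForm_succ, pathForm_succ, add_assoc]
    have hmem : ∀ j < 2 * m + 1, v j ∈ l := fun j hj =>
      List.mem_map.2 ⟨j, List.mem_range.2 hj, rfl⟩
    have hlP : (l.map vertex).prod * P = 0 := list_prod_mul_pathForm fun j hj => hmem j (by lia)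
    have hlx : (l.map vertex).prod * x =
        (((List.range (2 * (m + 1) + 1)).map v).map vertex).prod := by
      rw [hx, mul_add, ← mul_assoc, list_prod_mul_vertex_of_mem (hmem _ (by lia)), zero_mul,
        zero_add, show 2 * (m + 1) + 1 = 2 * m + 1 + 1 + 1 by ring, List.range_succ,
        List.range_succ]
      simp [hl]
    calc vertex (v 0) * pathForm v (2 * (m + 1)) ^ (m + 1)
        = vertex (v 0) * P ^ m * P + (m + 1) • (vertex (v 0) * P ^ m * x) := by
          rw [hP, add_pow_of_mul_self_eq_zero (commute_pathForm v _ x)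
            (vertex_mul_vertex_add_mul_self _ _ _), mul_add, mul_smul_comm, pow_succ, ← mul_assoc,
            ← mul_assoc]
      _ = ((m + 1).factorial : F) • ((l.map vertex).prod * x) := by
          rw [ih, smul_mul_assoc, hlP, smul_zero, zero_add, smul_mul_assoc,
            ← Nat.cast_smul_eq_nsmul F, smul_smul, Nat.factorial_succ, Nat.cast_mul]
      _ = _ := by rw [hlx]

theorem vertex_mul_add_pow {x : VertexAlgebra F V} (hx : ∀ y, Commute x y) (u v : V) (s : ℕ) :
    vertex v * (x + vertex u * vertex v) ^ s = vertex v * x ^ s := by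
  induction s with
  | zero => simp
  | succ s ih =>
    have h : vertex v * (x + vertex u * vertex v) = x * vertex v := by
      rw [mul_add, vertex_anticomm u, mul_neg, vertex_mul_vertex_mul_self, neg_zero, add_zero,
        (hx _).eq]
    rw [pow_succ', ← mul_assoc, h, mul_assoc, ih, ← mul_assoc, (hx _).eq, mul_assoc, ← pow_succ']

end Prod

section LineForm

variable {p : ℕ} [Fact p.Prime] {B : Type*}

local notation "𝔸" => VertexAlgebra (ZMod p) (B × ZMod p)

/-- The invariant quadratic element attached to a line. -/
noncomputable def lineForm (b : B) : VertexAlgebra (ZMod p) (B × ZMod p) :=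
  ∑ a : ZMod p, vertex (b, a) * vertex (b, a + 1)

theorem commute_lineForm (b : B) (x : 𝔸) : Commute (lineForm b) x :=
  Commute.sum_left _ _ _ fun _ _ => commute_vertex_mul_vertex _ _ x

theorem boundary_lineForm_mul (b : B) (x : 𝔸) :
    boundary (lineForm b * x) = lineForm b * boundary x := by
  have h : ∑ a : ZMod p, (vertex (b, a + 1) : 𝔸) = ∑ a : ZMod p, vertex (b, a) :=
    Equiv.sum_comp (Equiv.addRight (1 : ZMod p)) fun a => (vertex (b, a) : 𝔸)
  simp only [lineForm, sum_mul, map_sum, mul_assoc, boundary_vertex_mul, mul_sub]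
  simp only [sub_sub_eq_add_sub, sum_sub_distrib, sum_add_distrib, ← sum_mul, h]
  abel

theorem boundary_lineForm_pow_mul (b : B) (s : ℕ) (x : 𝔸) :
    boundary (lineForm b ^ s * x) = lineForm b ^ s * boundary x := by
  induction s with
  | zero => simp
  | succ s ih => rw [pow_succ', mul_assoc, boundary_lineForm_mul, ih, mul_assoc]

theorem contract_lineForm_mul {b : B} {v : B × ZMod p} (hv : v.1 ≠ b) (x : 𝔸) :
    contract v (lineForm b * x) = lineForm b * contract v x := by
  have h : ∀ a, (b, a) ≠ v := fun a h => hv (by rw [← h])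
  simp [lineForm, sum_mul, map_sum, mul_assoc, contract_vertex_mul_of_ne (h _)]

theorem map_lineForm {σ : B × ZMod p → B × ZMod p} {b b' : B} {c : ZMod p}
    (hσ : ∀ a, σ (b, a) = (b', a + c)) : map σ (lineForm b : 𝔸) = lineForm b' := by
  simp only [lineForm, map_sum, map_mul, map_vertex, hσ, add_right_comm _ (1 : ZMod p) c]
  exact Equiv.sum_comp (Equiv.addRight c) fun a => (vertex (b', a) * vertex (b', a + 1) : 𝔸)

/-- The fundamental class of the boundary of the simplex spanned by a line. -/
noncomputable def topForm (b : B) : VertexAlgebra (ZMod p) (B × ZMod p) :=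
  if p = 2 then ∑ a : ZMod p, vertex (b, a) else lineForm b ^ ((p - 1) / 2)

theorem neg_eq_self_of_two (hp : p = 2) (x : 𝔸) : -x = x := by
  have h : (-1 : ZMod p) = 1 := by subst hp; rfl
  rw [← one_smul (ZMod p) x, ← neg_smul, h]

theorem commute_topForm (b : B) (x : 𝔸) : Commute (topForm b) x := by
  rw [topForm]
  split_ifs with hp
  · refine commute_of_vertex (fun v => ?_) x
    refine Commute.sum_left _ _ _ fun a _ => ?_
    rw [commute_iff_eq, vertex_anticomm, neg_eq_self_of_two hp]
  · exact (commute_lineForm b x).pow_left _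

theorem boundary_topForm_mul (b : B) (x : 𝔸) :
    boundary (topForm b * x) = topForm b * boundary x := by
  rw [topForm]
  split_ifs with hp
  · simp only [sum_mul, map_sum, boundary_vertex_mul, sum_sub_distrib, sum_const, card_univ,
    ZMod.card]
    rw [← Nat.cast_smul_eq_nsmul (ZMod p), CharP.cast_eq_zero, zero_smul, zero_sub,
      neg_eq_self_of_two hp]
  · exact boundary_lineForm_pow_mul _ _ _

theorem contract_topForm_mul {b : B} {v : B × ZMod p} (hv : v.1 ≠ b) (x : 𝔸) :
    contract v (topForm b * x) = topForm b * contract v x := by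
  rw [topForm]
  split_ifs with hp
  · have h : ∀ a, (b, a) ≠ v := fun a h => hv (by rw [← h])
    simp only [sum_mul, map_sum, contract_vertex_mul_of_ne (h _), neg_eq_self_of_two hp]
  · generalize (p - 1) / 2 = s
    induction s with
    | zero => simp
    | succ s ih => rw [pow_succ', mul_assoc, contract_lineForm_mul hv, ih, mul_assoc]

theorem contractList_topForm_mul {b : B} {l : List (B × ZMod p)} (hl : ∀ v ∈ l, v.1 ≠ b) (x : 𝔸) :
    contractList l (topForm b * x) = topForm b * contractList l x := by
  induction l with
  | nil => rfl
  | cons v l ih =>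
    simp only [List.mem_cons, forall_eq_or_imp] at hl
    rw [contractList_cons, ih hl.2, contract_topForm_mul hl.1, contractList_cons]

theorem map_topForm {σ : B × ZMod p → B × ZMod p} {b b' : B} {c : ZMod p}
    (hσ : ∀ a, σ (b, a) = (b', a + c)) : map σ (topForm b : 𝔸) = topForm b' := by
  rw [topForm, topForm]
  split_ifs with hp
  · simp only [map_sum, map_vertex, hσ]
    exact Equiv.sum_comp (Equiv.addRight c) fun a => (vertex (b', a) : 𝔸)
  · rw [map_pow, map_lineForm hσ]

/-! ### Filtration by the number of vertices on a line -/

/-- Chains whose simplices have at most `s` vertices on the line `b`. -/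
noncomputable def lineFiltration (b : B) :
    ℕ → Submodule (ZMod p) (VertexAlgebra (ZMod p) (B × ZMod p))
  | 0 => ⨅ a : ZMod p, LinearMap.ker (contract (b, a))
  | s + 1 => ⨅ a : ZMod p, (lineFiltration b s).comap (contract (b, a))

theorem mem_lineFiltration_zero {b : B} {x : 𝔸} :
    x ∈ lineFiltration b 0 ↔ ∀ a, contract (b, a) x = 0 := by
  simp [lineFiltration]

theorem mem_lineFiltration_succ {b : B} {s : ℕ} {x : 𝔸} :
    x ∈ lineFiltration b (s + 1) ↔ ∀ a, contract (b, a) x ∈ lineFiltration b s := by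
  simp [lineFiltration]

theorem lineFiltration_succ_le (b : B) (s : ℕ) :
    lineFiltration b s ≤ (lineFiltration b (s + 1) : Submodule (ZMod p) 𝔸) := by
  induction s with
  | zero =>
    intro x hx
    rw [mem_lineFiltration_succ]
    intro a
    rw [mem_lineFiltration_zero.1 hx a]
    exact Submodule.zero_mem _
  | succ s ih =>
    intro x hx
    rw [mem_lineFiltration_succ] at hx ⊢
    exact fun a => ih (hx a)

theorem lineFiltration_mono (b : B) : Monotone (lineFiltration b : ℕ → Submodule (ZMod p) 𝔸) :=
  monotone_nat_of_le_succ (lineFiltration_succ_le b)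

theorem one_mem_lineFiltration (b : B) (s : ℕ) : (1 : 𝔸) ∈ lineFiltration b s :=
  lineFiltration_mono b (Nat.zero_le s) (mem_lineFiltration_zero.2 fun _ => contract_one _)

theorem vertex_mul_mem_lineFiltration {b : B} {s : ℕ} {x : 𝔸} (hx : x ∈ lineFiltration b s)
    (v : B × ZMod p) :
    vertex v * x ∈ lineFiltration b (s + 1) := by
  classical
  induction s generalizing x with
  | zero =>
    rw [mem_lineFiltration_succ]
    intro a
    rw [contract_vertex_mul, mem_lineFiltration_zero.1 hx a, mul_zero, sub_zero]
    split_ifs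
    exacts [hx, Submodule.zero_mem _]
  | succ s ih =>
    rw [mem_lineFiltration_succ]
    intro a
    rw [contract_vertex_mul]
    refine Submodule.sub_mem _ ?_ (ih (mem_lineFiltration_succ.1 hx a))
    split_ifs
    exacts [hx, Submodule.zero_mem _]

theorem vertex_mul_mem_lineFiltration_of_ne {b : B} {s : ℕ} {x : 𝔸} (hx : x ∈ lineFiltration b s)
    {v : B × ZMod p}
    (hv : v.1 ≠ b) : vertex v * x ∈ lineFiltration b s := by
  have hne : ∀ a, v ≠ (b, a) := fun a h => hv (by rw [h])
  induction s generalizing x with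
  | zero =>
    rw [mem_lineFiltration_zero] at hx ⊢
    intro a
    rw [contract_vertex_mul_of_ne (hne a), hx a, mul_zero, neg_zero]
  | succ s ih =>
    rw [mem_lineFiltration_succ] at hx ⊢
    intro a
    rw [contract_vertex_mul_of_ne (hne a)]
    exact Submodule.neg_mem _ (ih (hx a))

theorem lineForm_pow_mul_mem_lineFiltration {b : B} {s : ℕ} {x : 𝔸} (hx : x ∈ lineFiltration b s)
    (t : ℕ) :
    lineForm b ^ t * x ∈ lineFiltration b (s + 2 * t) := by
  induction t with
  | zero => simpa using hx
  | succ t ih =>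
    rw [pow_succ', mul_assoc, lineForm, sum_mul]
    refine Submodule.sum_mem _ fun a _ => ?_
    rw [mul_assoc]
    exact vertex_mul_mem_lineFiltration (vertex_mul_mem_lineFiltration ih _) _

theorem lineForm_pow_mul_mem_lineFiltration_of_ne {b b' : B} (h : b' ≠ b) {s : ℕ} {x : 𝔸}
    (hx : x ∈ lineFiltration b s) (t : ℕ) : lineForm b' ^ t * x ∈ lineFiltration b s := by
  induction t with
  | zero => simpa using hx
  | succ t ih =>
    rw [pow_succ', mul_assoc, lineForm, sum_mul]
    refine Submodule.sum_mem _ fun a _ => ?_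
    rw [mul_assoc]
    exact vertex_mul_mem_lineFiltration_of_ne (vertex_mul_mem_lineFiltration_of_ne ih h) h

theorem topForm_mul_mem_lineFiltration {b : B} {s : ℕ} {x : 𝔸} (hx : x ∈ lineFiltration b s) :
    topForm b * x ∈ lineFiltration b (s + (p - 1)) := by
  rw [topForm]
  split_ifs with hp
  · rw [sum_mul]
    refine Submodule.sum_mem _ fun a _ =>
      lineFiltration_mono b ?_ (vertex_mul_mem_lineFiltration hx _)
    lia
  · exact lineFiltration_mono b (by lia) (lineForm_pow_mul_mem_lineFiltration hx _)

theorem topForm_mul_mem_lineFiltration_of_ne {b b' : B} (h : b' ≠ b) {s : ℕ} {x : 𝔸}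
    (hx : x ∈ lineFiltration b s) : topForm b' * x ∈ lineFiltration b s := by
  rw [topForm]
  split_ifs with hp
  · rw [sum_mul]
    exact Submodule.sum_mem _ fun a _ => vertex_mul_mem_lineFiltration_of_ne hx h
  · exact lineForm_pow_mul_mem_lineFiltration_of_ne h hx _

theorem contractList_eq_zero_of_mem_lineFiltration {b : B} {s : ℕ} {x : 𝔸}
    (hx : x ∈ lineFiltration b s) {l : List (B × ZMod p)} (hl : ∀ v ∈ l, v.1 = b)
    (hs : s < l.length) : contractList l x = 0 := by
  induction l generalizing s x with
  | nil => simp at hs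
  | cons v l ih =>
    simp only [List.mem_cons, forall_eq_or_imp] at hl
    obtain ⟨rfl, hl⟩ := hl
    rw [List.length_cons] at hs
    cases s with
    | zero =>
      exact contractList_eq_zero_of_contract (v := v) (by simp) (mem_lineFiltration_zero.1 hx v.2)
    | succ s =>
      have h := ih (mem_lineFiltration_succ.1 hx v.2) hl (by lia)
      rw [Prod.mk.eta] at h
      have h2 : contractList (l ++ [v]) x = 0 := by rw [contractList_append]; exact h
      exact contractList_eq_zero_of_perm (List.perm_append_singleton v l) h2

theorem contractList_line_eq_zero {b : B} {s : ℕ} (hs : s < p) {x : 𝔸}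
    (hx : x ∈ lineFiltration b s) :
    contractList (line p b) x = 0 :=
  contractList_eq_zero_of_mem_lineFiltration hx (fun v hv => (mem_line b v).1 hv) (by
    rw [line_eq, List.length_map, List.length_range]; exact hs)

/-! ### The top contraction of the fundamental class of a line -/

theorem lineForm_eq_pathForm_add (b : B) {t : ℕ} (hp : p = 2 * t + 1) :
    (lineForm b : 𝔸) = pathForm (fun j => (b, (j : ZMod p))) (2 * t) +
      vertex (b, ((2 * t : ℕ) : ZMod p)) * vertex (b, 0) := by
  have hlast : ((2 * t + 1 : ℕ) : ZMod p) = 0 :=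
    (CharP.cast_eq_zero_iff (ZMod p) p (2 * t + 1)).2 (dvd_of_eq hp)
  have hpath : (lineForm b : 𝔸) = pathForm (fun j => (b, (j : ZMod p))) p := by
    refine (sum_bij (fun (j : ℕ) _ => (j : ZMod p)) (fun _ _ => mem_univ _) ?_ ?_ ?_).symm
    · intro i hi j hj h
      have := congrArg ZMod.val h
      rwa [ZMod.val_cast_of_lt (Finset.mem_range.1 hi),
        ZMod.val_cast_of_lt (Finset.mem_range.1 hj)] at this
    · exact fun a _ => ⟨a.val, Finset.mem_range.2 a.val_lt, by simp⟩
    · exact fun j _ => by push_cast; rfl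
  have hp' : (pathForm (fun j => (b, (j : ZMod p))) p : 𝔸) =
      pathForm (fun j => (b, (j : ZMod p))) (2 * t + 1) := congrArg _ hp
  rw [hpath, hp', pathForm_succ, hlast]

theorem vertex_mul_topForm (b : B) : ∃ c : ZMod p, c ≠ 0 ∧
    (vertex (b, 0) * topForm b : 𝔸) =
      c • (vertex (b, 0) * ((lineTail p b).map vertex).prod) := by
  have hline : (vertex (b, 0) * ((lineTail p b).map vertex).prod : 𝔸) =
      ((line p b).map vertex).prod := by
    simp [line]
  rw [hline, line_eq, topForm]
  split_ifs with hp
  · refine ⟨1, one_ne_zero, ?_⟩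
    subst hp
    rw [show (univ : Finset (ZMod 2)) = {0, 1} from rfl, sum_pair zero_ne_one]
    simp [List.range_succ, mul_add]
  · have hodd : p = 2 * ((p - 1) / 2) + 1 := by
      have := (Nat.Prime.eq_two_or_odd (Fact.out : p.Prime)).resolve_left hp
      lia
    refine ⟨(((p - 1) / 2).factorial : ZMod p), ?_, ?_⟩
    · rw [Ne, CharP.cast_eq_zero_iff (ZMod p) p, (Fact.out : p.Prime).dvd_factorial]
      have := (Fact.out : p.Prime).pos
      lia
    · have := vertex_mul_pathForm_pow (F := ZMod p) (fun j => (b, (j : ZMod p))) ((p - 1) / 2)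
      rw [Nat.cast_zero, ← hodd] at this
      rw [lineForm_eq_pathForm_add b hodd, vertex_mul_add_pow (commute_pathForm _ _), this]

theorem exists_contractList_lineTail_topForm_eq (b : B) :
    ∃ κ : ZMod p, contractList (lineTail p b) (topForm b : 𝔸) = algebraMap (ZMod p) 𝔸 κ := by
  refine exists_eq_algebraMap_of_contract_eq_zero fun v => ?_
  by_cases hv : v.1 = b
  · rcases List.mem_cons.1 ((mem_line b v).2 hv) with rfl | h
    · have hmem : (topForm b : 𝔸) ∈ lineFiltration b (p - 1) := by
        simpa using topForm_mul_mem_lineFiltration (one_mem_lineFiltration (p := p) b 0)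
      exact contractList_line_eq_zero (Nat.sub_lt (Fact.out : p.Prime).pos one_pos) hmem
    · exact contract_contractList_of_mem h _
  · have htop : contract v (topForm b : 𝔸) = 0 := by
      simpa using contract_topForm_mul hv (1 : 𝔸)
    exact contractList_eq_zero_of_contract (l := v :: lineTail p b) List.mem_cons_self htop

theorem contractList_lineTail_topForm_ne_zero (b : B) :
    contractList (lineTail p b) (topForm b : 𝔸) ≠ 0 := by
  intro h0
  have hline := nodup_line (p := p) b
  obtain ⟨c, hc, h⟩ := vertex_mul_topForm (p := p) b
  obtain ⟨e, he⟩ := contractList_list_prod (F := ZMod p) hline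
  have hleft : contractList (line p b) (vertex (b, 0) * topForm b : 𝔸) = 0 := by
    rw [line, contractList_cons, contractList_vertex_mul (List.nodup_cons.1 hline).1, h0, mul_zero,
      smul_zero, map_zero]
  have hright : contractList (line p b) (vertex (b, 0) * topForm b : 𝔸) =
      algebraMap (ZMod p) 𝔸 (c * (-1) ^ e) := by
    rw [h, map_smul, Algebra.algebraMap_eq_smul_one, mul_smul, ← he]
    rfl
  rw [hleft, ← map_zero (algebraMap (ZMod p) 𝔸), ExteriorAlgebra.algebraMap_inj] at hright
  simp [hc] at hright

theorem exists_contractList_lineTail_topForm (b : B) : ∃ κ : ZMod p, κ ≠ 0 ∧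
    contractList (lineTail p b) (topForm b : 𝔸) = algebraMap (ZMod p) 𝔸 κ := by
  obtain ⟨κ, hκ⟩ := exists_contractList_lineTail_topForm_eq (p := p) b
  refine ⟨κ, ?_, hκ⟩
  rintro rfl
  exact contractList_lineTail_topForm_ne_zero b (by rw [hκ, map_zero])

end LineForm

end VertexAlgebra

/-! ### Systems of lines -/

/-- A set of lines, with levels, on which the group `(ZMod p) ^ k` acts in such a way that the
coordinates up to the level of a line fix that line. The coordinate indexed by the level of a line
is the one that rotates the points of that line. -/
structure LineSystem (p k : ℕ) (B : Type*) where
  /-- The level of a line. -/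
  level : B → Fin k
  /-- The action on lines. -/
  translate : (Fin k → ZMod p) → B → B
  translate_zero : ∀ b, translate 0 b = b
  translate_add : ∀ g h b, translate (g + h) b = translate g (translate h b)
  level_translate : ∀ g b, level (translate g b) = level b
  translate_single : ∀ j t b, j ≤ level b → translate (Pi.single j t) b = b

namespace EquivariantComplex

variable {p k : ℕ} [Fact p.Prime]

theorem even_sub_one_mul_or_eq_two (q : ℤ) : Even (((p : ℤ) - 1) * q) ∨ p = 2 := by
  rcases (Fact.out : p.Prime).eq_two_or_odd' with h | h
  · exact Or.inr h
  · exact Or.inl ((((Int.odd_coe_nat p).2 h).sub_odd odd_one).mul_right q)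

theorem neg_one_zpow_sub_one_mul (q : ℤ) : (-1 : ZMod p) ^ ((p - 1) * q) = 1 := by
  rcases even_sub_one_mul_or_eq_two (p := p) q with h | rfl
  · exact h.neg_one_zpow
  · rw [show (-1 : ZMod 2) = 1 from rfl, one_zpow]

variable {M : Type*} [AddCommGroup M] [Module (ZMod p) M] (C : EquivariantComplex p k M)

theorem periodic_eq_act_sub_of_two (hp : p = 2) (i : Fin k) (a : ℤ) (x : M) :
    C.periodic i a x = C.act (Pi.single i 1) x - x := by
  subst hp
  rcases Int.even_or_odd a with ha | ha
  · have hneg : -x = x := by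
      rw [← neg_one_smul (ZMod 2), show (-1 : ZMod 2) = 1 from rfl, one_smul]
    rw [C.periodic_of_even i ha, show (univ : Finset (ZMod 2)) = {0, 1} from rfl,
      sum_pair zero_ne_one, Pi.single_zero, C.act_zero, sub_eq_add_neg, hneg, add_comm]
  · rw [C.periodic_of_odd i ha]

theorem periodic_add_sub_one_mul (i : Fin k) (a q : ℤ) (x : M) :
    C.periodic i (a + (p - 1) * q) x = C.periodic i a x := by
  rcases even_sub_one_mul_or_eq_two (p := p) q with h | hp
  · rcases Int.even_or_odd a with ha | ha
    · rw [C.periodic_of_even i ha, C.periodic_of_even i (ha.add h)]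
    · rw [C.periodic_of_odd i ha, C.periodic_of_odd i (ha.add_even h)]
  · rw [C.periodic_eq_act_sub_of_two hp, C.periodic_eq_act_sub_of_two hp]

end EquivariantComplex

namespace LineSystem

open VertexAlgebra

variable {p k : ℕ} {B : Type*} (S : LineSystem p k B)

/-- The action on the points of the lines. -/
def move (g : Fin k → ZMod p) (v : B × ZMod p) : B × ZMod p :=
  (S.translate g v.1, v.2 + g (S.level v.1))

theorem move_zero : S.move 0 = id := by
  ext v <;> simp [move, S.translate_zero]

theorem move_add (g h : Fin k → ZMod p) : S.move (g + h) = S.move g ∘ S.move h := by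
  ext v
  · simp [move, S.translate_add]
  · simp [move, S.level_translate, add_comm (g _), add_assoc]

theorem move_injective (g : Fin k → ZMod p) : (S.move g).Injective := by
  refine Function.LeftInverse.injective (g := S.move (-g)) fun v => ?_
  rw [← Function.comp_apply (f := S.move (-g)), ← S.move_add, neg_add_cancel, S.move_zero, id]

theorem translate_translate_neg (g : Fin k → ZMod p) (b : B) :
    S.translate g (S.translate (-g) b) = b := by
  rw [← S.translate_add, add_neg_cancel, S.translate_zero]

theorem translate_neg_translate (g : Fin k → ZMod p) (b : B) :
    S.translate (-g) (S.translate g b) = b := by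
  rw [← S.translate_add, neg_add_cancel, S.translate_zero]

theorem translate_bijective (g : Fin k → ZMod p) : (S.translate g).Bijective :=
  Function.bijective_iff_has_inverse.2
    ⟨S.translate (-g), S.translate_neg_translate g, S.translate_translate_neg g⟩

theorem move_single_of_lt {j : Fin k} {b : B} (h : j < S.level b) (t a : ZMod p) :
    S.move (Pi.single j t) (b, a) = (b, a) := by
  simp [move, S.translate_single j t b h.le, h.ne']

theorem move_single_level (b : B) (t a : ZMod p) :
    S.move (Pi.single (S.level b) t) (b, a) = (b, a + t) := by
  simp [move, S.translate_single _ t b le_rfl]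

/-- The augmented chains on the points of the lines. -/
noncomputable def chains : EquivariantComplex p k (VertexAlgebra (ZMod p) (B × ZMod p)) where
  d := boundary
  act g := (map (S.move g)).toLinearMap
  d_d := boundary_boundary
  act_zero x := by simp [S.move_zero, map_id]
  act_add g h x := by simp [S.move_add, map_comp]
  d_act g x := boundary_map _ x

local notation "𝔸" => VertexAlgebra (ZMod p) (B × ZMod p)

@[simp] theorem chains_d (x : 𝔸) : S.chains.d x = boundary x := rfl

@[simp] theorem chains_act (g : Fin k → ZMod p) (x : 𝔸) :
    S.chains.act g x = map (S.move g) x := rfl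

theorem isSubcomplex_deleted [NeZero p] : S.chains.IsSubcomplex (deleted p B) where
  d_mem _ := boundary_mem_deleted
  act_mem g _ := map_mem_deleted (S.move_injective g)
    fun b => ⟨S.translate (-g) b, fun _ => S.translate_translate_neg g b⟩

section LineChain

variable [Fact p.Prime]

/-- The chains on a single line that form the part of dimension at most `p - 2` of a periodic
resolution; the signs are those of `EquivariantComplex.total`. -/
noncomputable def lineChain (b : B) (s : ℤ) : VertexAlgebra (ZMod p) (B × ZMod p) :=
  if 0 ≤ s ∧ s + 2 ≤ p then
    (-1 : ZMod p) ^ (s / 2) • (lineForm b ^ (s / 2).toNat *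
      if Even s then vertex (b, 0) else vertex (b, 0) * vertex (b, 1))
  else 0

theorem lineChain_of_neg (b : B) {s : ℤ} (hs : s < 0) : (lineChain b s : 𝔸) = 0 :=
  if_neg fun h => absurd h.1 hs.not_ge

theorem lineChain_of_lt (b : B) {s : ℤ} (hs : (p : ℤ) < s + 2) : (lineChain b s : 𝔸) = 0 :=
  if_neg fun h => absurd h.2 hs.not_ge

theorem lineChain_even (b : B) {t : ℕ} (ht : 2 * t + 2 ≤ p) :
    (lineChain b (2 * t) : 𝔸) = (-1 : ZMod p) ^ t • (lineForm b ^ t * vertex (b, 0)) := by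
  have h : (2 * (t : ℤ)) / 2 = t := by lia
  rw [lineChain, if_pos (by lia), if_pos (even_two_mul _), h, Int.toNat_natCast, zpow_natCast]

theorem lineChain_odd (b : B) {t : ℕ} (ht : 2 * t + 3 ≤ p) :
    (lineChain b (2 * t + 1) : 𝔸) =
      (-1 : ZMod p) ^ t • (lineForm b ^ t * (vertex (b, 0) * vertex (b, 1))) := by
  have h : (2 * (t : ℤ) + 1) / 2 = t := by lia
  rw [lineChain, if_pos (by lia), if_neg (by simp), h, Int.toNat_natCast, zpow_natCast]

theorem lineChain_mem_lineFiltration (b : B) (s : ℤ) :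
    (lineChain b s : 𝔸) ∈ lineFiltration b (p - 1) := by
  rw [lineChain]
  split_ifs with hs heven
  · refine Submodule.smul_mem _ _ (lineFiltration_mono b (a := 1 + 2 * (s / 2).toNat) (by lia) ?_)
    refine lineForm_pow_mul_mem_lineFiltration ?_ _
    simpa using vertex_mul_mem_lineFiltration (one_mem_lineFiltration b 0) (b, 0)
  · refine Submodule.smul_mem _ _ (lineFiltration_mono b (a := 2 + 2 * (s / 2).toNat) ?_ ?_)
    · obtain ⟨t, rfl⟩ := Int.not_even_iff_odd.1 heven
      lia
    refine lineForm_pow_mul_mem_lineFiltration (vertex_mul_mem_lineFiltration ?_ _) _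
    simpa using vertex_mul_mem_lineFiltration (one_mem_lineFiltration b 0) (b, 1)
  · exact Submodule.zero_mem _

theorem lineChain_mem_lineFiltration_of_ne {b b' : B} (h : b ≠ b') (s : ℤ) :
    (lineChain b s : 𝔸) ∈ lineFiltration b' 0 := by
  have hvertex (a : ZMod p) : (vertex (b, a) : 𝔸) ∈ lineFiltration b' 0 := by
    simpa using vertex_mul_mem_lineFiltration_of_ne (one_mem_lineFiltration b' 0) (v := (b, a)) h
  rw [lineChain]
  split_ifs with hs heven
  · exact Submodule.smul_mem _ _ (lineForm_pow_mul_mem_lineFiltration_of_ne h (hvertex 0) _)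
  · exact Submodule.smul_mem _ _ (lineForm_pow_mul_mem_lineFiltration_of_ne h
      (vertex_mul_mem_lineFiltration_of_ne (hvertex 1) h) _)
  · exact Submodule.zero_mem _

theorem map_lineChain {σ : B × ZMod p → B × ZMod p} {b : B} (hσ : ∀ a, σ (b, a) = (b, a))
    (s : ℤ) : map σ (lineChain b s : 𝔸) = lineChain b s := by
  have hform : map σ (lineForm b : 𝔸) = lineForm b := map_lineForm (c := 0) (by simpa using hσ)
  simp only [lineChain]
  split_ifs <;> simp [hform, hσ]

theorem boundary_lineChain_even (b : B) {t : ℕ} (ht : 2 * t + 2 ≤ p) :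
    boundary (lineChain b (2 * t) : 𝔸) = (-1 : ZMod p) ^ t • lineForm b ^ t := by
  rw [lineChain_even b ht, map_smul, boundary_lineForm_pow_mul, boundary_vertex, mul_one]

theorem boundary_lineChain_odd (b : B) {t : ℕ} (ht : 2 * t + 3 ≤ p) :
    boundary (lineChain b (2 * t + 1) : 𝔸) =
      (-1 : ZMod p) ^ t • (lineForm b ^ t * (vertex (b, 1) - vertex (b, 0))) := by
  rw [lineChain_odd b ht, map_smul, boundary_lineForm_pow_mul, boundary_vertex_mul, boundary_vertex,
    mul_one]

theorem map_move_single_level_lineForm (b : B) (t : ZMod p) :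
    map (S.move (Pi.single (S.level b) t)) (lineForm b : 𝔸) = lineForm b :=
  map_lineForm (S.move_single_level b t)

theorem periodic_lineChain_even (b : B) {t : ℕ} (ht : 2 * t + 2 ≤ p) :
    S.chains.periodic (S.level b) (2 * t + 1) (lineChain b (2 * t)) =
      (-1 : ZMod p) ^ t • (lineForm b ^ t * (vertex (b, 1) - vertex (b, 0))) := by
  rw [S.chains.periodic_of_odd _ (odd_two_mul_add_one _), lineChain_even b ht, map_smul, mul_sub,
    smul_sub]
  simp [S.map_move_single_level_lineForm, S.move_single_level]

theorem periodic_lineChain_odd (b : B) {t : ℕ} (ht : 2 * t + 3 ≤ p) :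
    S.chains.periodic (S.level b) (2 * t + 2) (lineChain b (2 * t + 1)) =
      (-1 : ZMod p) ^ t • (lineForm b ^ (t + 1) : 𝔸) := by
  have hsum : ∑ a : ZMod p, (vertex (b, a) * vertex (b, 1 + a) : 𝔸) = lineForm b := by
    simp only [lineForm, add_comm]
  rw [S.chains.periodic_of_even _ (by simp [parity_simps]), lineChain_odd b ht, pow_succ]
  simp [S.map_move_single_level_lineForm, S.move_single_level, ← smul_sum, ← mul_sum, hsum]

theorem boundary_lineChain_add_periodic (b : B) {s : ℤ} (hs : s ≠ p - 1) :
    (-1 : ZMod p) ^ s • boundary (lineChain b s : 𝔸) +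
      S.chains.periodic (S.level b) s (lineChain b (s - 1)) = if s = 0 then 1 else 0 := by
  have hp := (Fact.out : p.Prime).two_le
  rcases lt_or_ge s 0 with hneg | hnonneg
  · simp [lineChain_of_neg (p := p) b hneg, lineChain_of_neg (p := p) b (s := s - 1) (by lia),
      hneg.ne]
  rcases le_or_gt (p : ℤ) s with hlarge | hsmall
  · simp [lineChain_of_lt (p := p) b (s := s) (by lia),
      lineChain_of_lt (p := p) b (s := s - 1) (by lia), show s ≠ 0 by lia]
  lift s to ℕ using hnonneg
  obtain ⟨t, rfl | rfl⟩ := Nat.even_or_odd' s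
  · have hboundary := boundary_lineChain_even (p := p) b (t := t) (by lia)
    push_cast
    rw [hboundary, (even_two_mul _).neg_one_zpow, one_smul]
    cases t with
    | zero => simp [lineChain_of_neg b (s := -1) (by lia)]
    | succ t =>
      have hperiodic := S.periodic_lineChain_odd b (t := t) (by lia)
      push_cast
      rw [show 2 * ((t : ℤ) + 1) - 1 = 2 * t + 1 by ring,
        show 2 * ((t : ℤ) + 1) = 2 * t + 2 by ring, hperiodic, if_neg (by lia), pow_succ]
      simp
  · have hboundary := boundary_lineChain_odd (p := p) b (t := t) (by lia)
    have hperiodic := S.periodic_lineChain_even b (t := t) (by lia)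
    push_cast
    rw [add_sub_cancel_right, hboundary, hperiodic, (odd_two_mul_add_one _).neg_one_zpow,
      if_neg (by lia)]
    simp

theorem exists_periodic_lineChain_eq_smul_topForm (b : B) : ∃ ε : ZMod p, ε ≠ 0 ∧
    S.chains.periodic (S.level b) (p - 1) (lineChain b (p - 2)) = ε • topForm b := by
  rcases (Fact.out : p.Prime).eq_two_or_odd' with rfl | ⟨t, ht⟩
  · refine ⟨1, one_ne_zero, ?_⟩
    have h := S.periodic_lineChain_even b (t := 0) (by lia)
    simp only [Nat.cast_zero, mul_zero, zero_add, pow_zero, one_smul, one_mul] at h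
    rw [Nat.cast_ofNat, sub_self, show (2 : ℤ) - 1 = 1 from rfl, h, topForm, if_pos rfl, one_smul,
      show (univ : Finset (ZMod 2)) = {0, 1} from rfl, sum_pair zero_ne_one, sub_eq_add_neg,
      neg_eq_self_of_two rfl, add_comm]
  · obtain ⟨t, rfl⟩ : ∃ u, t = u + 1 :=
      Nat.exists_eq_add_one.2 (by have := (Fact.out : p.Prime).two_le; lia)
    refine ⟨(-1) ^ t, pow_ne_zero _ (neg_ne_zero.2 one_ne_zero), ?_⟩
    rw [topForm, if_neg (by lia), show (p - 1) / 2 = t + 1 by lia,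
      ← S.periodic_lineChain_odd b (by lia), show (p : ℤ) - 1 = 2 * t + 2 by lia,
      show (p : ℤ) - 2 = 2 * t + 1 by lia]

theorem exists_boundary_lineChain_add_periodic_eq (b : B) : ∃ ε : ZMod p, ε ≠ 0 ∧ ∀ s : ℤ,
    (-1 : ZMod p) ^ s • boundary (lineChain b s : 𝔸) +
      S.chains.periodic (S.level b) s (lineChain b (s - 1)) =
        (if s = 0 then 1 else 0) + if s = p - 1 then ε • topForm b else 0 := by
  obtain ⟨ε, hε, h⟩ := S.exists_periodic_lineChain_eq_smul_topForm b
  refine ⟨ε, hε, fun s => ?_⟩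
  rcases eq_or_ne s (p - 1) with rfl | hs
  · have hp := (Fact.out : p.Prime).two_le
    rw [lineChain_of_lt b (s := (p : ℤ) - 1) (by lia), map_zero, smul_zero,
      show (p : ℤ) - 1 - 1 = p - 2 by ring, h, if_neg (by lia), if_pos rfl]
  · rw [S.boundary_lineChain_add_periodic b hs, if_neg hs, add_zero]

end LineChain

end LineSystem

namespace VertexAlgebra

variable {p : ℕ} [Fact p.Prime] {B : Type*}

local notation "𝔸" => VertexAlgebra (ZMod p) (B × ZMod p)

/-- `topForm b` as an element of the center. -/
noncomputable def topCentral (p : ℕ) [Fact p.Prime] {B : Type*} (b : B) :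
    Submonoid.center (VertexAlgebra (ZMod p) (B × ZMod p)) :=
  ⟨topForm b, Semigroup.mem_center_iff.2 fun x => (commute_topForm b x).symm⟩

/-- The fundamental class of the join of the boundaries of the simplices spanned by the lines in
`Q`. The product is taken in the center, where it does not depend on an order of `Q`. -/
noncomputable def topProd (p : ℕ) [Fact p.Prime] {B : Type*} (Q : Finset B) :
    VertexAlgebra (ZMod p) (B × ZMod p) :=
  (∏ b ∈ Q, topCentral p b : Submonoid.center (VertexAlgebra (ZMod p) (B × ZMod p)))

@[simp] theorem topProd_empty : topProd p (∅ : Finset B) = 1 := by simp [topProd]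

theorem topProd_insert [DecidableEq B] {Q : Finset B} {b : B} (hb : b ∉ Q) :
    topProd p (insert b Q) = topForm b * topProd p Q := by
  simp [topProd, prod_insert hb, topCentral]

theorem topProd_mul_topForm [DecidableEq B] {Q : Finset B} {b : B} (hb : b ∉ Q) :
    topProd p Q * topForm b = topProd p (insert b Q) := by
  rw [topProd_insert hb, (commute_topForm b _).eq]

theorem boundary_topProd_mul (Q : Finset B) (x : 𝔸) :
    boundary (topProd p Q * x) = topProd p Q * boundary x := by
  classical
  induction Q using Finset.induction_on generalizing x with
  | empty => simp
  | insert b Q hb ih => rw [topProd_insert hb, mul_assoc, boundary_topForm_mul, ih, mul_assoc]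

theorem boundary_topProd (Q : Finset B) : boundary (topProd p Q : 𝔸) = 0 := by
  simpa using boundary_topProd_mul (p := p) Q 1

section Map

variable {σ : B × ZMod p → B × ZMod p} {τ : B → B} {c : B → ZMod p}

theorem map_topProd (hσ : ∀ b a, σ (b, a) = (τ b, a + c b)) (Q : Finset B) :
    map σ (topProd p Q : 𝔸) =
      (∏ b ∈ Q, topCentral p (τ b) : Submonoid.center (VertexAlgebra (ZMod p) (B × ZMod p))) := by
  classical
  induction Q using Finset.induction_on with
  | empty => simp
  | insert b Q hb ih =>
    rw [topProd_insert hb, map_mul, ih, prod_insert hb, map_topForm (hσ b)]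
    rfl

theorem map_topProd_univ [Fintype B] (hσ : ∀ b a, σ (b, a) = (τ b, a + c b)) (hτ : τ.Bijective) :
    map σ (topProd p (univ : Finset B) : 𝔸) = topProd p univ := by
  rw [map_topProd hσ, topProd, hτ.prod_comp (topCentral p)]

theorem map_topProd_of_forall_eq (hσ : ∀ b a, σ (b, a) = (τ b, a + c b)) {Q : Finset B}
    (hτ : ∀ b ∈ Q, τ b = b) : map σ (topProd p Q : 𝔸) = topProd p Q := by
  rw [map_topProd hσ, topProd, prod_congr rfl fun b hb => by rw [hτ b hb]]

end Map

theorem topProd_mul_mem_lineFiltration [DecidableEq B] (Q : Finset B) {b : B} {s : ℕ} {x : 𝔸}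
    (hx : x ∈ lineFiltration b s) :
    topProd p Q * x ∈ lineFiltration b (s + if b ∈ Q then p - 1 else 0) := by
  induction Q using Finset.induction_on with
  | empty => simpa using hx
  | insert b' Q hb ih =>
    rw [topProd_insert hb, mul_assoc]
    rcases eq_or_ne b b' with rfl | hne
    · rw [if_neg hb, add_zero] at ih
      simpa using topForm_mul_mem_lineFiltration ih
    · simpa [hne] using topForm_mul_mem_lineFiltration_of_ne hne.symm ih

theorem mem_deleted_of_forall_mem_lineFiltration {x : 𝔸}
    (hx : ∀ b, x ∈ lineFiltration b (p - 1)) : x ∈ deleted p B :=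
  mem_deleted.2 fun b => contractList_line_eq_zero (Nat.sub_lt (NeZero.pos p) one_pos) (hx b)

theorem topProd_mem_deleted (Q : Finset B) : topProd p Q ∈ deleted p B := by
  classical
  refine mem_deleted_of_forall_mem_lineFiltration fun b => lineFiltration_mono b ?_ (by
    simpa using topProd_mul_mem_lineFiltration (p := p) Q (one_mem_lineFiltration b 0))
  split_ifs <;> simp

theorem exists_contractList_prod_topForm {L : List B} (hL : L.Nodup) : ∃ κ : ZMod p, κ ≠ 0 ∧
    contractList (L.flatMap (lineTail p)) (L.map topForm).prod = algebraMap (ZMod p) 𝔸 κ := by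
  induction L with
  | nil => exact ⟨1, one_ne_zero, by simp⟩
  | cons b L ih =>
    rw [List.nodup_cons] at hL
    obtain ⟨κ, hκ, h⟩ := ih hL.2
    obtain ⟨κ', hκ', h'⟩ := exists_contractList_lineTail_topForm (p := p) b
    have hne : ∀ v ∈ L.flatMap (lineTail p), v.1 ≠ b := by
      rintro v hv rfl
      simp only [List.mem_flatMap, lineTail, List.mem_map] at hv
      obtain ⟨b', hb', t, -, rfl⟩ := hv
      exact hL.1 hb'
    refine ⟨κ * κ', mul_ne_zero hκ hκ', ?_⟩
    rw [List.flatMap_cons, contractList_append, List.map_cons, List.prod_cons,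
      contractList_topForm_mul hne, h, Algebra.algebraMap_eq_smul_one, mul_smul_comm, mul_one,
      map_smul, h', map_mul, Algebra.smul_def]

theorem exists_contractList_topProd_univ [Fintype B] : ∃ κ : ZMod p, κ ≠ 0 ∧
    contractList (allTails p B) (topProd p univ) = algebraMap (ZMod p) 𝔸 κ := by
  obtain ⟨κ, hκ, h⟩ := exists_contractList_prod_topForm (p := p) (nodup_toList (univ : Finset B))
  refine ⟨κ, hκ, ?_⟩
  rw [allTails, ← h, topProd, ← prod_map_toList, Submonoid.coe_list_prod, List.map_map]
  rfl

end VertexAlgebra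

namespace LineSystem

open VertexAlgebra

variable {p k : ℕ} {B : Type*} (S : LineSystem p k B)

/-- The multidegree of `topProd p Q`: each line contributes `p - 1` in the direction of its
level. -/
def deg (Q : Finset B) (j : Fin k) : ℤ := (p - 1) * #{b ∈ Q | S.level b = j}

@[simp] theorem deg_empty : S.deg (∅ : Finset B) = 0 := by
  ext j
  simp [deg]

theorem deg_eq_zero {Q : Finset B} {j : Fin k} (h : ∀ b ∈ Q, S.level b ≠ j) : S.deg Q j = 0 := by
  rw [deg, filter_eq_empty_iff.2 h]
  simp

theorem deg_insert [DecidableEq B] {Q : Finset B} {b : B} (hb : b ∉ Q) :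
    S.deg (insert b Q) = S.deg Q + Pi.single (S.level b) ((p : ℤ) - 1) := by
  ext j
  rw [Pi.add_apply, deg, deg, filter_insert]
  split_ifs with h
  · subst h
    rw [card_insert_of_notMem (by simp [hb]), Pi.single_eq_same]
    push_cast
    ring
  · rw [Pi.single_eq_of_ne (Ne.symm h), add_zero]

theorem deg_apply_eq_of_forall_mem {Q Q' : Finset B} {j : Fin k}
    (h : ∀ b, S.level b = j → (b ∈ Q ↔ b ∈ Q')) : S.deg Q j = S.deg Q' j := by
  rw [deg, deg]
  congr 3
  ext b
  simp only [mem_filter, and_congr_left_iff]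
  exact h b

theorem eq_deg_iff {Q : Finset B} {b : B} {α : Fin k → ℤ}
    (h : ∀ j ≠ S.level b, α j = S.deg Q j) :
    α = S.deg Q ↔ α (S.level b) - S.deg Q (S.level b) = 0 := by
  refine ⟨fun hα => by rw [hα, sub_self], fun hα => funext fun j => ?_⟩
  rcases eq_or_ne j (S.level b) with rfl | hj
  exacts [sub_eq_zero.1 hα, h j hj]

theorem eq_deg_insert_iff [DecidableEq B] {Q : Finset B} {b : B} {α : Fin k → ℤ}
    (hb : b ∉ Q) (h : ∀ j ≠ S.level b, α j = S.deg Q j) :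
    α = S.deg (insert b Q) ↔ α (S.level b) - S.deg Q (S.level b) = p - 1 := by
  rw [S.deg_insert hb]
  refine ⟨fun hα => by simp [hα], fun hα => funext fun j => ?_⟩
  rcases eq_or_ne j (S.level b) with rfl | hj
  · rw [Pi.add_apply, Pi.single_eq_same, ← hα, add_sub_cancel]
  · rw [Pi.add_apply, Pi.single_eq_of_ne hj, add_zero, h j hj]

variable [Fact p.Prime]

local notation "𝔸" => VertexAlgebra (ZMod p) (B × ZMod p)

theorem deg_nonneg (Q : Finset B) : 0 ≤ S.deg Q := fun _ =>
  mul_nonneg (by have := NeZero.pos p; lia) (Int.natCast_nonneg _)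

theorem neg_one_zpow_sum_deg (Q : Finset B) (s : Finset (Fin k)) :
    (-1 : ZMod p) ^ (∑ j ∈ s, S.deg Q j) = 1 := by
  simp only [deg, ← mul_sum, EquivariantComplex.neg_one_zpow_sub_one_mul]

theorem periodic_sub_deg (Q : Finset B) (i : Fin k) (a : ℤ) (x : 𝔸) :
    S.chains.periodic i (a - S.deg Q i) x = S.chains.periodic i a x := by
  conv_rhs => rw [← sub_add_cancel a (S.deg Q i)]
  exact (S.chains.periodic_add_sub_one_mul i _ _ x).symm

theorem map_move_single_topProd {Q : Finset B} {i : Fin k} (h : ∀ b ∈ Q, i ≤ S.level b)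
    (t : ZMod p) : map (S.move (Pi.single i t)) (topProd p Q : 𝔸) = topProd p Q :=
  map_topProd_of_forall_eq (τ := S.translate (Pi.single i t))
    (c := fun b => (Pi.single i t : Fin k → ZMod p) (S.level b)) (fun _ _ => rfl)
    fun b hb => S.translate_single i t b (h b hb)

theorem periodic_topProd_mul {Q : Finset B} {i : Fin k} (h : ∀ b ∈ Q, i ≤ S.level b) (a : ℤ)
    (x : 𝔸) : S.chains.periodic i a (topProd p Q * x) = topProd p Q * S.chains.periodic i a x := by
  rcases Int.even_or_odd a with ha | ha
  · simp [EquivariantComplex.periodic_of_even, ha, S.map_move_single_topProd h, mul_sum]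
  · simp [EquivariantComplex.periodic_of_odd, ha, S.map_move_single_topProd h, mul_sub]

theorem isFundamentalCycle_topProd [Fintype B] :
    S.chains.IsFundamentalCycle (deleted p B) (topProd p univ) := by
  obtain ⟨κ, hκ, h⟩ := exists_contractList_topProd_univ (p := p) (B := B)
  exact
    { mem := topProd_mem_deleted univ
      act_eq := fun g => map_topProd_univ (c := fun b => g (S.level b)) (fun _ _ => rfl)
        (S.translate_bijective g)
      d_eq_zero := boundary_topProd univ
      exists_eq_smul_add_d := fun z hz hdz =>
        exists_eq_smul_add_boundary (topProd_mem_deleted _) (boundary_topProd _) hκ h hz hdz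
      eq_zero_of_smul_eq_d := fun c w hw hc => eq_zero_of_smul_eq_boundary hκ h c hw hc }

theorem topProd_mul_lineChain_mem_deleted {Q : Finset B} {b : B} (hb : b ∉ Q) (s : ℤ) :
    topProd p Q * lineChain b s ∈ deleted p B := by
  classical
  refine mem_deleted_of_forall_mem_lineFiltration fun b' => ?_
  rcases eq_or_ne b b' with rfl | hne
  · simpa [hb] using topProd_mul_mem_lineFiltration Q (lineChain_mem_lineFiltration b s)
  · exact lineFiltration_mono b' (by split_ifs <;> lia)
      (topProd_mul_mem_lineFiltration Q (lineChain_mem_lineFiltration_of_ne hne s))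

section StepFamily

open Classical in
/-- The product of `topProd p Q`, placed in its multidegree, with the truncated resolution on the
line `b`; it links the fundamental class of `Q` to that of `insert b Q`. -/
noncomputable def stepFamily (Q : Finset B) (b : B) (α : Fin k → ℤ) :
    VertexAlgebra (ZMod p) (B × ZMod p) :=
  if ∀ j ≠ S.level b, α j = S.deg Q j then
    topProd p Q * lineChain b (α (S.level b) - S.deg Q (S.level b)) else 0

variable {Q : Finset B} {b : B} {α : Fin k → ℤ}

theorem stepFamily_mem_deleted (hb : b ∉ Q) (α : Fin k → ℤ) :
    S.stepFamily Q b α ∈ deleted p B := by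
  rw [stepFamily]
  split_ifs
  exacts [topProd_mul_lineChain_mem_deleted hb _, Submodule.zero_mem _]

theorem stepFamily_eq_zero_of_sum_neg (hα : ∑ j, α j < 0) : S.stepFamily Q b α = 0 := by
  rw [stepFamily]
  split_ifs with h
  · rw [lineChain_of_neg, mul_zero]
    by_contra! hc
    refine hα.not_ge (sum_nonneg fun j _ => ?_)
    have hj := S.deg_nonneg Q j
    rw [Pi.zero_apply] at hj
    rcases eq_or_ne j (S.level b) with rfl | hne
    · lia
    · rwa [h j hne]
  · rfl

theorem periodic_stepFamily_eq_zero (hle : ∀ x ∈ Q, S.level b ≤ S.level x) {j : Fin k}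
    (hj : j ≠ S.level b) (hα : S.level b < j → α j ≠ S.deg Q j + 1) :
    S.chains.periodic j (α j) (S.stepFamily Q b (α - Pi.single j 1)) = 0 := by
  rw [stepFamily]
  split_ifs with h
  · have hj' : α j = S.deg Q j + 1 := sub_eq_iff_eq_add.1 (by simpa using h j hj)
    have hlt : j < S.level b := (lt_or_gt_of_ne hj).resolve_right fun hgt => hα hgt hj'
    rw [S.deg_eq_zero fun x hx hxj => (hle x hx).not_gt (hxj ▸ hlt), zero_add] at hj'
    rw [hj', EquivariantComplex.periodic_of_odd _ _ odd_one, chains_act, map_mul,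
      S.map_move_single_topProd (fun x hx => hlt.le.trans (hle x hx)),
      map_lineChain (S.move_single_of_lt hlt 1), sub_self]
  · exact map_zero _

theorem total_stepFamily_apply [Fintype B] (hle : ∀ x ∈ Q, S.level b ≤ S.level x)
    (hup : ∀ y, S.level b < S.level y → y ∈ Q) (hα : α ≤ S.deg univ) :
    S.chains.total (S.stepFamily Q b) α =
      (-1 : ZMod p) ^ (∑ j, α j) • boundary (S.stepFamily Q b α) +
        (-1 : ZMod p) ^ (∑ l ∈ Iio (S.level b), α l) •
          S.chains.periodic (S.level b) (α (S.level b))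
            (S.stepFamily Q b (α - Pi.single (S.level b) 1)) := by
  have hgt : ∀ j, S.level b < j → α j ≠ S.deg Q j + 1 := fun j hbj hj => by
    have hdeg := S.deg_apply_eq_of_forall_mem (Q := Q) (Q' := univ) (j := j)
      (fun y hy => by simpa using hup y (hy ▸ hbj))
    have := hα j
    lia
  rw [EquivariantComplex.total_apply, chains_d]
  congr 1
  exact sum_eq_single _ (fun j _ hj => by
    rw [S.periodic_stepFamily_eq_zero hle hj (hgt j), smul_zero]) (by simp)

theorem total_stepFamily_apply_of_forall_eq [Fintype B]
    (hle : ∀ x ∈ Q, S.level b ≤ S.level x) (hup : ∀ y, S.level b < S.level y → y ∈ Q)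
    (hα : α ≤ S.deg univ) (h : ∀ j ≠ S.level b, α j = S.deg Q j) {s : ℤ}
    (hs : s = α (S.level b) - S.deg Q (S.level b)) :
    S.chains.total (S.stepFamily Q b) α = topProd p Q * ((-1 : ZMod p) ^ s •
      boundary (lineChain b s) + S.chains.periodic (S.level b) s (lineChain b (s - 1))) := by
  have hpred : ∀ j ≠ S.level b, (α - Pi.single (S.level b) 1 : Fin k → ℤ) j = S.deg Q j :=
    fun j hj => by simp [h j hj, hj]
  have hsum : ∑ j, α j = s + ∑ j, S.deg Q j := by
    rw [hs, ← sub_eq_iff_eq_add, ← sum_sub_distrib, sum_eq_single (S.level b) _ (by simp)]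
    exact fun j _ hj => by rw [h j hj, sub_self]
  have hsum_Iio : ∑ l ∈ Iio (S.level b), α l = ∑ l ∈ Iio (S.level b), S.deg Q l :=
    sum_congr rfl fun j hj => h j (mem_Iio.1 hj).ne
  rw [S.total_stepFamily_apply hle hup hα, hsum_Iio, S.neg_one_zpow_sum_deg, one_smul, hsum,
    zpow_add₀ (neg_ne_zero.2 one_ne_zero), S.neg_one_zpow_sum_deg, mul_one, stepFamily, if_pos h,
    stepFamily, if_pos hpred, ← hs, boundary_topProd_mul, S.periodic_topProd_mul hle, mul_add,
    mul_smul_comm, ← S.periodic_sub_deg Q, ← hs, Pi.sub_apply, Pi.single_eq_same, sub_right_comm,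
    ← hs]

theorem exists_total_stepFamily_eq [Fintype B] [DecidableEq B] (hb : b ∉ Q)
    (hle : ∀ x ∈ Q, S.level b ≤ S.level x) (hup : ∀ y, S.level b < S.level y → y ∈ Q) :
    ∃ ε : ZMod p, ε ≠ 0 ∧ ∀ α ≤ S.deg univ, S.chains.total (S.stepFamily Q b) α =
      (Pi.single (S.deg Q) (topProd p Q) +
        Pi.single (S.deg (insert b Q)) (ε • topProd p (insert b Q)) : (Fin k → ℤ) → 𝔸) α := by
  obtain ⟨ε, hε, hline⟩ := S.exists_boundary_lineChain_add_periodic_eq b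
  refine ⟨ε, hε, fun α hα => ?_⟩
  rw [Pi.add_apply, Pi.single_apply, Pi.single_apply]
  by_cases h : ∀ j ≠ S.level b, α j = S.deg Q j
  · simp only [S.total_stepFamily_apply_of_forall_eq hle hup hα h rfl, hline, S.eq_deg_iff h,
      S.eq_deg_insert_iff hb h, mul_add, mul_ite, mul_one, mul_zero, mul_smul_comm,
      topProd_mul_topForm hb]
  · have hpred : ¬ ∀ j ≠ S.level b, (α - Pi.single (S.level b) 1 : Fin k → ℤ) j = S.deg Q j :=
      fun hpred => h fun j hj => by simpa [hj] using hpred j hj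
    rw [S.total_stepFamily_apply hle hup hα, stepFamily, stepFamily, if_neg h, if_neg hpred,
      if_neg, if_neg]
    · simp
    · rintro rfl
      exact h fun j hj => by simp [S.deg_insert hb, hj]
    · rintro rfl
      exact h fun _ _ => rfl

end StepFamily

/-- The lines are added in the order of decreasing levels. -/
theorem exists_total_eq_single_add_single [Fintype B] (Q : Finset B)
    (hup : ∀ x ∈ Q, ∀ y, S.level x < S.level y → y ∈ Q) :
    ∃ ψ : (Fin k → ℤ) → 𝔸, ∃ c : ZMod p, c ≠ 0 ∧ (∀ α, ψ α ∈ deleted p B) ∧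
      (∀ α, ∑ j, α j < 0 → ψ α = 0) ∧ ∀ α ≤ S.deg univ, S.chains.total ψ α =
        (Pi.single 0 1 + Pi.single (S.deg Q) (c • topProd p Q) : (Fin k → ℤ) → 𝔸) α := by
  classical
  induction Q using Finset.induction_on_min_value S.level with
  | empty =>
    refine ⟨0, -1, neg_ne_zero.2 one_ne_zero, fun _ => Submodule.zero_mem _, fun _ _ => rfl,
      fun α _ => ?_⟩
    rw [deg_empty, topProd_empty, ← Pi.single_add]
    simp
  | insert b Q hb hle ih =>
    obtain ⟨ψ, c, hc, hψ, hψ0, hψt⟩ := ih fun x hx y hxy =>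
      (mem_insert.1 (hup x (mem_insert_of_mem hx) y hxy)).resolve_left fun hy =>
        (hle x hx).not_gt (hy ▸ hxy)
    obtain ⟨ε, hε, hstep⟩ := S.exists_total_stepFamily_eq hb hle fun y hy =>
      (mem_insert.1 (hup b (mem_insert_self _ _) y hy)).resolve_left fun hyb =>
        hy.ne (by rw [hyb])
    refine ⟨ψ - c • S.stepFamily Q b, -(c * ε), neg_ne_zero.2 (mul_ne_zero hc hε), fun α => ?_,
      fun α hα => ?_, fun α hα => ?_⟩
    · exact Submodule.sub_mem _ (hψ α) (Submodule.smul_mem _ _ (S.stepFamily_mem_deleted hb α))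
    · simp [hψ0 α hα, S.stepFamily_eq_zero_of_sum_neg hα]
    · rw [map_sub, map_smul, Pi.sub_apply, Pi.smul_apply, hψt α hα, hstep α hα]
      simp only [neg_smul, mul_smul, Pi.single_neg, Pi.single_smul, Pi.add_apply, Pi.smul_apply,
        Pi.neg_apply, smul_add]
      abel

theorem not_exists_total_eq_single_of_mem_deleted [Fintype B] (x : (Fin k → ℤ) → 𝔸)
    (hx : ∀ α, x α ∈ deleted p B) (hx0 : ∀ α, ∑ j, α j < 0 → x α = 0)
    (h : ∀ α ≤ S.deg univ,
      S.chains.total x α = (Pi.single 0 1 : (Fin k → ℤ) → 𝔸) α) : False := by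
  obtain ⟨ψ, c, hc, hψ, hψ0, hψt⟩ := S.exists_total_eq_single_add_single univ
    fun _ _ y _ => mem_univ y
  have ht : ∀ α ≤ S.deg univ, S.chains.total (ψ - x) α =
      (Pi.single (S.deg univ) (c • topProd p univ) : (Fin k → ℤ) → 𝔸) α := fun α hα => by
    rw [map_sub, Pi.sub_apply, hψt α hα, h α hα, Pi.add_apply, add_sub_cancel_left]
  refine hc (S.isFundamentalCycle_topProd.eq_zero_of_total_eq_smul (y := ψ - x)
    S.isSubcomplex_deleted (sum_nonneg fun i _ => S.deg_nonneg univ i)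
    (fun α => Submodule.sub_mem _ (hψ α) (hx α))
    (fun α hα => by simp [hψ0 α hα, hx0 α hα]) (fun α hα hlt => ?_) ?_)
  · rw [ht α hα, Pi.single_eq_of_ne fun h => hlt.ne (by rw [h])]
  · rw [ht _ le_rfl, Pi.single_eq_same]

end LineSystem

/-! ### Chains of ordered simplices -/

/-- Chains of ordered simplices, given by the lists of their vertices. Repeated vertices are
allowed, and the empty list is the generator of degree `-1` of the augmented complex. -/
abbrev ListChain (F V : Type*) [CommRing F] := List V →₀ F

namespace ListChain

variable {F V W M : Type*} [CommRing F] [AddCommGroup M] [Module F M]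

theorem hom_ext {φ ψ : ListChain F V →ₗ[F] M}
    (h : ∀ l, φ (Finsupp.single l 1) = ψ (Finsupp.single l 1)) : φ = ψ :=
  Finsupp.lhom_ext' fun l => LinearMap.ext_ring (h l)

theorem eqOn_supported {φ ψ : ListChain F V →ₗ[F] M} {s : Set (List V)}
    (h : ∀ l ∈ s, φ (Finsupp.single l 1) = ψ (Finsupp.single l 1)) :
    Set.EqOn φ ψ (Finsupp.supported F F s) := by
  rw [Finsupp.supported_eq_span_single]
  exact LinearMap.eqOn_span' (Set.forall_mem_image.2 h)

theorem map_mem_of_mem_supported {φ : ListChain F V →ₗ[F] M} {P : Submodule F M}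
    {s : Set (List V)} (h : ∀ l ∈ s, φ (Finsupp.single l 1) ∈ P) {c : ListChain F V}
    (hc : c ∈ Finsupp.supported F F s) : φ c ∈ P := by
  have hle : Finsupp.supported F F s ≤ P.comap φ := by
    rw [Finsupp.supported_eq_span_single, Submodule.span_le]
    exact Set.forall_mem_image.2 h
  exact hle hc

/-- The cone over a chain with apex `v`. -/
noncomputable def cone (v : V) : ListChain F V →ₗ[F] ListChain F V :=
  Finsupp.lmapDomain F F (List.cons v)

@[simp] theorem cone_single (v : V) (l : List V) (c : F) :
    cone v (Finsupp.single l c) = Finsupp.single (v :: l) c := by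
  simp [cone]

/-- The augmented boundary of an ordered simplex. -/
noncomputable def boundaryList (F : Type*) {V : Type*} [CommRing F] : List V → ListChain F V
  | [] => 0
  | v :: l => Finsupp.single l 1 - cone v (boundaryList F l)

/-- The augmented boundary operator. -/
noncomputable def boundary : ListChain F V →ₗ[F] ListChain F V :=
  Finsupp.linearCombination F (boundaryList F)

@[simp] theorem boundary_single (l : List V) :
    boundary (Finsupp.single l 1) = boundaryList F l := by
  simp [boundary]

theorem boundary_cone (v : V) (x : ListChain F V) :
    boundary (cone v x) = x - cone v (boundary x) :=
  LinearMap.congr_fun (f := boundary ∘ₗ cone v) (g := LinearMap.id - cone v ∘ₗ boundary)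
    (hom_ext fun l => by simp [boundaryList]) x

theorem boundary_boundaryList (l : List V) : boundary (boundaryList F l) = 0 := by
  induction l with
  | nil => simp [boundaryList]
  | cons v l ih => simp [boundaryList, boundary_cone, ih]

theorem boundary_boundary (x : ListChain F V) : boundary (boundary x) = 0 :=
  LinearMap.congr_fun (f := boundary ∘ₗ boundary) (g := 0)
    (hom_ext fun l => by simp [boundary_boundaryList]) x

/-- The chain map induced by a map of vertices. -/
noncomputable def mapVertices (F : Type*) [CommRing F] (σ : V → W) :
    ListChain F V →ₗ[F] ListChain F W :=
  Finsupp.lmapDomain F F (List.map σ)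

@[simp] theorem mapVertices_single (σ : V → W) (l : List V) (c : F) :
    mapVertices F σ (Finsupp.single l c) = Finsupp.single (l.map σ) c := by
  simp [mapVertices]

theorem mapVertices_id : mapVertices F (id : V → V) = LinearMap.id :=
  hom_ext fun l => by simp

theorem mapVertices_comp {X : Type*} (τ : W → X) (σ : V → W) :
    mapVertices F (τ ∘ σ) = mapVertices F τ ∘ₗ mapVertices F σ :=
  hom_ext fun l => by simp

theorem mapVertices_cone (σ : V → W) (v : V) (x : ListChain F V) :
    mapVertices F σ (cone v x) = cone (σ v) (mapVertices F σ x) :=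
  LinearMap.congr_fun (f := mapVertices F σ ∘ₗ cone v) (g := cone (σ v) ∘ₗ mapVertices F σ)
    (hom_ext fun l => by simp) x

theorem mapVertices_boundaryList (σ : V → W) (l : List V) :
    mapVertices F σ (boundaryList F l) = boundaryList F (l.map σ) := by
  induction l with
  | nil => simp [boundaryList]
  | cons v l ih => simp [boundaryList, mapVertices_cone, ih]

theorem boundary_mapVertices (σ : V → W) (x : ListChain F V) :
    boundary (mapVertices F σ x) = mapVertices F σ (boundary x) :=
  LinearMap.congr_fun (f := boundary ∘ₗ mapVertices F σ) (g := mapVertices F σ ∘ₗ boundary)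
    (hom_ext fun l => by simp [mapVertices_boundaryList]) x

theorem cone_mem_supported {s t : Set (List V)} {v : V} (h : ∀ l ∈ s, v :: l ∈ t)
    {c : ListChain F V} (hc : c ∈ Finsupp.supported F F s) :
    cone v c ∈ Finsupp.supported F F t :=
  map_mem_of_mem_supported
    (fun l hl => by rw [cone_single]; exact Finsupp.single_mem_supported _ _ (h l hl)) hc

theorem mapVertices_mem_supported {s : Set (List V)} {t : Set (List W)} {σ : V → W}
    (h : ∀ l ∈ s, l.map σ ∈ t) {c : ListChain F V} (hc : c ∈ Finsupp.supported F F s) :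
    mapVertices F σ c ∈ Finsupp.supported F F t :=
  map_mem_of_mem_supported
    (fun l hl => by rw [mapVertices_single]; exact Finsupp.single_mem_supported _ _ (h l hl)) hc

theorem boundaryList_mem_supported (l : List V) : boundaryList F l ∈
    Finsupp.supported F F {l' | l'.Sublist l ∧ l'.length + 1 = l.length} := by
  induction l with
  | nil => simp [boundaryList]
  | cons v l ih =>
    refine Submodule.sub_mem _ (Finsupp.single_mem_supported _ _ (by simp))
      (cone_mem_supported (fun l' hl' => ?_) ih)
    simpa using hl'

section Subdivision

variable [AddCommGroup V] [Module ℝ V] [AddCommGroup W] [Module ℝ W]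

/-- The barycenter of a list of points; it is `0` for the empty list. -/
noncomputable def barycenter (l : List V) : V := (l.length : ℝ)⁻¹ • l.sum

theorem barycenter_map (σ : V →ₗ[ℝ] W) (l : List V) :
    barycenter (l.map σ) = σ (barycenter l) := by
  simp [barycenter, map_list_sum]

/-- Barycentric subdivision of the simplices with a given number of vertices. The recursion needs
the number of vertices to be the same for all the simplices of a chain. -/
noncomputable def subdivideLength (F V : Type*) [CommRing F] [AddCommGroup V] [Module ℝ V] :
    ℕ → ListChain F V →ₗ[F] ListChain F V
  | 0 => LinearMap.id
  | n + 1 => Finsupp.linearCombination F fun l =>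
      cone (barycenter l) (subdivideLength F V n (boundaryList F l))

/-- Barycentric subdivision. -/
noncomputable def subdivide (F V : Type*) [CommRing F] [AddCommGroup V] [Module ℝ V] :
    Module.End F (ListChain F V) :=
  Finsupp.linearCombination F fun l => subdivideLength F V l.length (Finsupp.single l 1)

theorem subdivide_single (l : List V) : subdivide F V (Finsupp.single l 1) =
    subdivideLength F V l.length (Finsupp.single l 1) := by
  simp [subdivide]

@[simp] theorem subdivide_single_nil :
    subdivide F V (Finsupp.single [] 1) = Finsupp.single [] 1 := by
  simp [subdivide_single, subdivideLength]

theorem subdivide_boundaryList {n : ℕ} {l : List V} (hl : l.length = n + 1) :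
    subdivide F V (boundaryList F l) = subdivideLength F V n (boundaryList F l) :=
  eqOn_supported (fun l' hl' => by rw [subdivide_single, Nat.succ_inj.1 (hl'.2.trans hl)])
    (boundaryList_mem_supported l)

theorem subdivide_single_of_length_eq_succ {n : ℕ} {l : List V} (hl : l.length = n + 1) :
    subdivide F V (Finsupp.single l 1) =
      cone (barycenter l) (subdivide F V (boundaryList F l)) := by
  rw [subdivide_single, subdivide_boundaryList hl, hl]
  simp [subdivideLength]

theorem boundary_subdivide_single (n : ℕ) (l : List V) (hl : l.length = n) :
    boundary (subdivide F V (Finsupp.single l 1)) = subdivide F V (boundaryList F l) := by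
  induction n generalizing l with
  | zero =>
    rw [List.length_eq_zero_iff] at hl
    subst hl
    simp [boundaryList]
  | succ n ih =>
    have h : boundary (subdivide F V (boundaryList F l)) =
        subdivide F V (boundary (boundaryList F l)) :=
      eqOn_supported (φ := boundary ∘ₗ subdivide F V) (ψ := subdivide F V ∘ₗ boundary)
        (fun l' hl' => by simpa using ih l' (Nat.succ_inj.1 (hl'.2.trans hl)))
        (boundaryList_mem_supported l)
    rw [subdivide_single_of_length_eq_succ hl, boundary_cone, h, boundary_boundaryList, map_zero,
      map_zero, sub_zero]

theorem commute_subdivide_boundary : Commute (subdivide F V) boundary :=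
  hom_ext fun l => by simp [boundary_subdivide_single _ l rfl]

theorem subdivide_mapVertices_single (σ : V →ₗ[ℝ] W) (n : ℕ) (l : List V) (hl : l.length = n) :
    subdivide F W (mapVertices F σ (Finsupp.single l 1)) =
      mapVertices F σ (subdivide F V (Finsupp.single l 1)) := by
  induction n generalizing l with
  | zero =>
    rw [List.length_eq_zero_iff] at hl
    subst hl
    simp
  | succ n ih =>
    have h : subdivide F W (mapVertices F σ (boundaryList F l)) =
        mapVertices F σ (subdivide F V (boundaryList F l)) :=
      eqOn_supported (φ := subdivide F W ∘ₗ mapVertices F σ) (ψ := mapVertices F σ ∘ₗ subdivide F V)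
        (fun l' hl' => ih l' (Nat.succ_inj.1 (hl'.2.trans hl))) (boundaryList_mem_supported l)
    rw [mapVertices_single, subdivide_single_of_length_eq_succ hl,
      subdivide_single_of_length_eq_succ (l := l.map σ) (by simpa using hl), mapVertices_cone, ← h,
      mapVertices_boundaryList, barycenter_map]

theorem commute_subdivide_mapVertices (σ : V →ₗ[ℝ] V) :
    Commute (subdivide F V) (mapVertices F σ) :=
  hom_ext fun l => subdivide_mapVertices_single σ _ l rfl

theorem subdivide_pow_single_nil (t : ℕ) :
    (subdivide F V ^ t) (Finsupp.single [] 1) = Finsupp.single [] 1 := by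
  rw [Module.End.coe_pow]
  exact Function.iterate_fixed subdivide_single_nil t

end Subdivision

section Mesh

section PseudoMetricSpace

variable [PseudoMetricSpace V]

/-- The lists of length `n` with all entries in `A` and at mutual distances at most `D`. -/
def smallLists (n : ℕ) (A : Set V) (D : ℝ) : Set (List V) :=
  {l | l.length = n ∧ (∀ v ∈ l, v ∈ A) ∧ ∀ v ∈ l, ∀ w ∈ l, dist v w ≤ D}

variable {A : Set V} {n : ℕ} {D : ℝ}

theorem smallLists_mono {D' : ℝ} (h : D ≤ D') : smallLists n A D ⊆ smallLists n A D' :=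
  fun _ hl => ⟨hl.1, hl.2.1, fun v hv w hw => (hl.2.2 v hv w hw).trans h⟩

theorem cons_mem_smallLists {b : V} (hb : b ∈ A) (hD : 0 ≤ D) {l : List V}
    (hl : l ∈ smallLists n (A ∩ Metric.closedBall b D) D) : b :: l ∈ smallLists (n + 1) A D := by
  obtain ⟨hlen, hA, hdist⟩ := hl
  refine ⟨by simp [hlen], List.forall_mem_cons.2 ⟨hb, fun v hv => (hA v hv).1⟩, ?_⟩
  simp only [List.mem_cons, forall_eq_or_imp, dist_self]
  exact ⟨⟨hD, fun v hv => Metric.mem_closedBall'.1 (hA v hv).2⟩,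
    fun v hv => ⟨(hA v hv).2, hdist v hv⟩⟩

end PseudoMetricSpace

variable [NormedAddCommGroup V] [NormedSpace ℝ V]

theorem barycenter_mem {A : Set V} (hA : Convex ℝ A) {l : List V} (hl : l ≠ [])
    (h : ∀ v ∈ l, v ∈ A) : barycenter l ∈ A := by
  have hlen : (l.length : ℝ) ≠ 0 := by simpa using hl
  have hsum : barycenter l = ∑ i : Fin l.length, (l.length : ℝ)⁻¹ • l.get i := by
    rw [barycenter, ← Finset.smul_sum, ← List.sum_ofFn, List.ofFn_get]
  rw [hsum]
  refine hA.sum_mem (fun _ _ => by positivity) ?_ fun i _ => h _ (List.get_mem l i)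
  simp [hlen]

theorem norm_sum_sub_length_smul_le {l : List V} {v : V} {D : ℝ} (h : ∀ w ∈ l, dist w v ≤ D) :
    ‖l.sum - (l.length : ℝ) • v‖ ≤ l.length * D := by
  induction l with
  | nil => simp
  | cons w l ih =>
    rw [List.forall_mem_cons, dist_eq_norm] at h
    have hsplit : (w :: l).sum - ((w :: l).length : ℝ) • v =
        (w - v) + (l.sum - (l.length : ℝ) • v) := by
      push_cast [List.sum_cons, List.length_cons]
      module
    rw [hsplit]
    refine (norm_add_le_of_le h.1 (ih h.2)).trans_eq ?_
    push_cast [List.length_cons]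
    ring

theorem dist_barycenter_le {l : List V} {D : ℝ} {v : V} (hv : v ∈ l)
    (h : ∀ w ∈ l, dist w v ≤ D) : dist v (barycenter l) ≤ ((l.length - 1) / l.length : ℝ) * D := by
  obtain ⟨l₁, l₂, rfl⟩ := List.append_of_mem hv
  have hlen : ((l₁ ++ v :: l₂).length : ℝ) = (l₁ ++ l₂).length + 1 := by
    push_cast [List.length_append, List.length_cons]
    ring
  have hpos : (0 : ℝ) < (l₁ ++ l₂).length + 1 := by positivity
  have hsub : barycenter (l₁ ++ v :: l₂) - v = ((l₁ ++ l₂).length + 1 : ℝ)⁻¹ •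
      ((l₁ ++ l₂).sum - ((l₁ ++ l₂).length : ℝ) • v) := by
    rw [eq_inv_smul_iff₀ hpos.ne', smul_sub, barycenter, hlen, smul_inv_smul₀ hpos.ne']
    simp only [List.sum_append, List.sum_cons]
    module
  rw [dist_comm, dist_eq_norm, hsub, norm_smul, norm_inv, Real.norm_of_nonneg hpos.le, hlen,
    add_sub_cancel_right, div_mul_eq_mul_div, inv_mul_eq_div]
  gcongr
  exact norm_sum_sub_length_smul_le fun w hw => h w (by simp at hw ⊢; tauto)

variable {A : Set V} {m n : ℕ} {D : ℝ}

theorem dist_barycenter_le_of_mem_smallLists (hn : n ≤ m + 1) (hD : 0 ≤ D) {l : List V}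
    (hl : l ∈ smallLists n A D) {v : V} (hv : v ∈ l) :
    dist v (barycenter l) ≤ (m / (m + 1) : ℝ) * D := by
  refine (dist_barycenter_le hv fun w hw => hl.2.2 w hw v hv).trans ?_
  have hpos : (0 : ℝ) < l.length := by
    exact_mod_cast List.length_pos_of_mem hv
  have hlen : (l.length : ℝ) ≤ m + 1 := by exact_mod_cast hl.1.trans_le hn
  gcongr ?_ * D
  rw [div_le_div_iff₀ hpos (by positivity)]
  linarith

theorem subdivide_single_mem (hn : n ≤ m + 1) (hD : 0 ≤ D) (hA : Convex ℝ A) {l : List V}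
    (hl : l ∈ smallLists n A D) : subdivide F V (Finsupp.single l 1) ∈
      Finsupp.supported F F (smallLists n A ((m / (m + 1) : ℝ) * D)) := by
  induction n generalizing l A with
  | zero =>
    rw [List.length_eq_zero_iff.1 hl.1, subdivide_single_nil]
    exact Finsupp.single_mem_supported _ _ (by simp [smallLists])
  | succ n ih =>
    have hne : l ≠ [] := List.ne_nil_of_length_eq_add_one hl.1
    rw [subdivide_single_of_length_eq_succ hl.1]
    refine cone_mem_supported (fun l' hl' => cons_mem_smallLists (barycenter_mem hA hne hl.2.1)
      (by positivity) hl') ?_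
    refine map_mem_of_mem_supported (fun l' hl' => ?_) (boundaryList_mem_supported l)
    -- Intersecting with a ball around the barycenter bounds the new edges from the apex.
    refine ih (by lia) (hA.inter (convex_closedBall _ _))
      ⟨Nat.succ_inj.1 (hl'.2.trans hl.1), ?_, ?_⟩
    · exact fun v hv => ⟨hl.2.1 v (hl'.1.subset hv),
        dist_barycenter_le_of_mem_smallLists hn hD hl (hl'.1.subset hv)⟩
    · exact fun v hv w hw => hl.2.2 v (hl'.1.subset hv) w (hl'.1.subset hw)

variable {ι : Type*} {A : ι → Set V}

theorem subdivide_pow_mem (hA : ∀ i, Convex ℝ (A i)) (hn : n ≤ m + 1) (hD : 0 ≤ D)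
    {c : ListChain F V} (hc : c ∈ Finsupp.supported F F (⋃ i, smallLists n (A i) D)) (t : ℕ) :
    (subdivide F V ^ t) c ∈
      Finsupp.supported F F (⋃ i, smallLists n (A i) ((m / (m + 1) : ℝ) ^ t * D)) := by
  induction t with
  | zero => simpa using hc
  | succ t ih =>
    rw [pow_succ' (subdivide F V), Module.End.mul_apply, pow_succ', mul_assoc]
    refine map_mem_of_mem_supported (fun l hl => ?_) ih
    obtain ⟨i, hi⟩ := Set.mem_iUnion.1 hl
    exact Finsupp.supported_mono (Set.subset_iUnion_of_subset i subset_rfl)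
      (subdivide_single_mem (F := F) hn (by positivity) (hA i) hi)

theorem exists_fine_subdivision (F : Type*) [CommRing F] (hA : ∀ i, Convex ℝ (A i)) (m : ℕ)
    (hD : 0 ≤ D) {δ : ℝ} (hδ : 0 < δ) :
    ∃ Φ : Module.End F (ListChain F V), (∀ c, Φ (boundary c) = boundary (Φ c)) ∧
      (∀ (σ : V →ₗ[ℝ] V) c, Φ (mapVertices F σ c) = mapVertices F σ (Φ c)) ∧
      Φ (Finsupp.single [] 1) = Finsupp.single [] 1 ∧
      ∀ n ≤ m + 1, ∀ c ∈ Finsupp.supported F F (⋃ i, smallLists n (A i) D),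
        Φ c ∈ Finsupp.supported F F (⋃ i, smallLists n (A i) δ) := by
  have hratio : (m / (m + 1) : ℝ) < 1 := (div_lt_one (by positivity)).2 (lt_add_one _)
  have hlim := (tendsto_pow_atTop_nhds_zero_of_lt_one (by positivity) hratio).mul_const D
  rw [zero_mul] at hlim
  obtain ⟨t, ht⟩ := (hlim.eventually_le_const hδ).exists
  refine ⟨subdivide F V ^ t, LinearMap.congr_fun (commute_subdivide_boundary.pow_left t).eq,
    fun σ => LinearMap.congr_fun ((commute_subdivide_mapVertices σ).pow_left t).eq,
    subdivide_pow_single_nil t, fun n hn c hc => ?_⟩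
  exact Finsupp.supported_mono (Set.iUnion_mono fun i => smallLists_mono ht)
    (subdivide_pow_mem hA hn hD hc t)

end Mesh

section Label

open VertexAlgebra

/-- The simplicial map to the vertex algebra given by a labelling of the vertices. -/
noncomputable def label (F : Type*) [CommRing F] (lab : V → W) :
    ListChain F V →ₗ[F] VertexAlgebra F W :=
  Finsupp.linearCombination F fun l => ((l.map lab).map vertex).prod

@[simp] theorem label_single (lab : V → W) (l : List V) :
    label F lab (Finsupp.single l 1) = ((l.map lab).map vertex).prod := by
  simp [label]

theorem label_cone (lab : V → W) (v : V) (c : ListChain F V) :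
    label F lab (cone v c) = vertex (lab v) * label F lab c :=
  LinearMap.congr_fun (f := label F lab ∘ₗ cone v)
    (g := LinearMap.mulLeft F (vertex (lab v)) ∘ₗ label F lab) (hom_ext fun l => by simp) c

theorem label_boundary (lab : V → W) (c : ListChain F V) :
    label F lab (boundary c) = VertexAlgebra.boundary (label F lab c) := by
  refine LinearMap.congr_fun (f := label F lab ∘ₗ boundary)
    (g := VertexAlgebra.boundary ∘ₗ label F lab) (hom_ext fun l => ?_) c
  simp only [LinearMap.comp_apply, boundary_single, label_single]
  induction l with
  | nil => simp [boundaryList, boundary_one]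
  | cons v l ih => simp [boundaryList, label_cone, boundary_vertex_mul, ih]

theorem label_mapVertices {lab : V → W} {σ : V → V} {τ : W → W} {s : Set (List V)}
    (h : ∀ l ∈ s, ∀ v ∈ l, lab (σ v) = τ (lab v)) {c : ListChain F V}
    (hc : c ∈ Finsupp.supported F F s) :
    label F lab (mapVertices F σ c) = map τ (label F lab c) := by
  refine eqOn_supported (φ := label F lab ∘ₗ mapVertices F σ)
    (ψ := (map τ).toLinearMap ∘ₗ label F lab) (fun l hl => ?_) hc
  simp only [LinearMap.comp_apply, mapVertices_single, label_single, AlgHom.toLinearMap_apply,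
    map_list_prod, List.map_map]
  congr 1
  exact List.map_congr_left fun v hv => by simp [h l hl v hv]

theorem label_mem_deleted {p : ℕ} [NeZero p] {B : Type*} {lab : V → B × ZMod p} {s : Set (List V)}
    (hs : ∀ l ∈ s, ∀ b, ∃ a, (b, a) ∉ l.map lab) {c : ListChain (ZMod p) V}
    (hc : c ∈ Finsupp.supported (ZMod p) (ZMod p) s) : label (ZMod p) lab c ∈ deleted p B := by
  refine map_mem_of_mem_supported (φ := label (ZMod p) lab) (fun l hl => ?_) hc
  rw [label_single]
  refine mem_deleted.2 fun b => ?_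
  obtain ⟨a, ha⟩ := hs l hl b
  exact contractList_eq_zero_of_contract ((mem_line b _).2 rfl) (contract_list_prod ha)

end Label

end ListChain

/-! ### Configurations in the deleted join -/

/-- Families of vectors in `V → ℝ` indexed by a group `G`. A family of nonnegative vectors of total
mass one is a point of the join of `G` copies of the simplex with vertex set `V`. -/
abbrev Config (G V : Type*) := G → V → ℝ

namespace Config

section Shift

variable {G V : Type*} [AddCommGroup G]

/-- The action of the index group on configurations by translation of the indices. -/
def shift (g : G) : Config G V →ₗ[ℝ] Config G V :=
  LinearMap.funLeft ℝ (V → ℝ) fun h => h - g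

@[simp] theorem shift_apply (g : G) (x : Config G V) (h : G) : shift g x h = x (h - g) := rfl

theorem shift_zero : ⇑(shift 0 : Config G V →ₗ[ℝ] Config G V) = id := by
  ext; simp

theorem shift_add (g h : G) :
    ⇑(shift (g + h) : Config G V →ₗ[ℝ] Config G V) = shift g ∘ shift h := by
  ext; simp [sub_sub]

theorem shift_shift_neg (g : G) (x : Config G V) : shift g (shift (-g) x) = x := by
  rw [← Function.comp_apply (f := shift g), ← shift_add, add_neg_cancel, shift_zero, id]

theorem sum_shift [Fintype G] (g : G) (x : Config G V) : ∑ h, shift g x h = ∑ h, x h :=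
  Equiv.sum_comp (Equiv.subRight g) x

end Shift

section Face

variable {G V : Type*} [Fintype G] [Fintype V] {γ : V → G} {x y : Config G V}

/-- The maximal simplices of the deleted join of simplices: the configurations in which each vertex
`j` is used by the point with index `γ j` only. -/
def face (γ : V → G) : Set (Config G V) :=
  {x | (∀ g j, 0 ≤ x g j) ∧ ∑ g, ∑ j, x g j = 1 ∧ ∀ g j, x g j ≠ 0 → γ j = g}

theorem convex_face (γ : V → G) : Convex ℝ (face γ) := by
  intro x hx y hy a b ha hb hab
  refine ⟨fun g j => ?_, ?_, fun g j h => ?_⟩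
  · exact add_nonneg (mul_nonneg ha (hx.1 g j)) (mul_nonneg hb (hy.1 g j))
  · simp only [Pi.add_apply, Pi.smul_apply, smul_eq_mul, sum_add_distrib, ← mul_sum, hx.2.1, hy.2.1,
      mul_one, hab]
  · by_contra hne
    have hxz : x g j = 0 := not_imp_comm.1 (hx.2.2 g j) hne
    have hyz : y g j = 0 := not_imp_comm.1 (hy.2.2 g j) hne
    exact h (by simp [hxz, hyz])

theorem le_one_of_mem_face (hx : x ∈ face γ) (g : G) (j : V) : x g j ≤ 1 := by
  rw [← hx.2.1]
  exact (single_le_sum (fun j _ => hx.1 g j) (mem_univ j)).trans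
    (single_le_sum (f := fun g => ∑ j, x g j) (fun g _ => sum_nonneg fun j _ => hx.1 g j)
      (mem_univ g))

theorem dist_le_one_of_mem_face (hx : x ∈ face γ) (hy : y ∈ face γ) : dist x y ≤ 1 := by
  refine (dist_pi_le_iff zero_le_one).2 fun g => (dist_pi_le_iff zero_le_one).2 fun j => ?_
  rw [Real.dist_eq, abs_le]
  constructor <;>
    linarith [hx.1 g j, hy.1 g j, le_one_of_mem_face hx g j, le_one_of_mem_face hy g j]

theorem isClosed_face (γ : V → G) : IsClosed (face γ) := by
  simp only [face, Set.ofPred_and, Set.ofPred_forall]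
  refine .inter ?_ (.inter ?_ ?_)
  · exact isClosed_iInter fun g => isClosed_iInter fun j =>
      isClosed_le continuous_const (by fun_prop)
  · exact isClosed_eq (by fun_prop) continuous_const
  · exact isClosed_iInter fun g => isClosed_iInter fun j =>
      isClosed_imp (isOpen_ne_fun (by fun_prop) continuous_const) isClosed_const

theorem isCompact_iUnion_face : IsCompact (⋃ γ, face γ : Set (Config G V)) :=
  isCompact_iUnion fun γ => Metric.isCompact_of_isClosed_isBounded (isClosed_face γ)
    (Metric.isBounded_iff.2 ⟨1, fun _ hx _ hy => dist_le_one_of_mem_face hx hy⟩)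

theorem exists_sum_apply_ne_zero_of_mem_face (hx : x ∈ face γ) : ∃ j, (∑ g, x g) j ≠ 0 := by
  by_contra! h
  have hsum := hx.2.1
  rw [sum_comm] at hsum
  simp only [Finset.sum_apply] at h
  simp [h] at hsum

theorem shift_mem_face [AddCommGroup G] (hx : x ∈ face γ) (g : G) :
    shift g x ∈ face fun j => γ j + g := by
  refine ⟨fun h j => hx.1 _ j, ?_, fun h j hne => eq_sub_iff_add_eq.1 (hx.2.2 _ j hne)⟩
  rw [← hx.2.1]
  exact Equiv.sum_comp (Equiv.subRight g) fun h => ∑ j, x h j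

theorem single_zero_mem_face [Zero G] [DecidableEq G] {w : V → ℝ} (hw : w ∈ stdSimplex ℝ V)
    (hγ : ∀ j, w j ≠ 0 → γ j = 0) : (Pi.single 0 w : Config G V) ∈ face γ := by
  refine ⟨fun g j => ?_, ?_, fun g j h => ?_⟩
  · rcases eq_or_ne g 0 with rfl | hg
    · simpa using hw.1 j
    · simp [hg]
  · rw [sum_eq_single 0 (fun g _ hg => by simp [hg]) (by simp), Pi.single_eq_same]
    exact hw.2
  · rcases eq_or_ne g 0 with rfl | hg
    · exact hγ j (by simpa using h)
    · simp [hg] at h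

end Face

section InitialLists

variable {G V : Type*} {n : ℕ} (e : V ≃ Fin n) {s : ℤ}

/-- The lists of `s` configurations in a common face that use only the first `s` vertices. -/
def initLists (G : Type*) [Fintype G] [Fintype V] (e : V ≃ Fin n) (s : ℤ) :
    Set (List (Config G V)) :=
  {l | (l.length : ℤ) = s ∧ ∃ γ, ∀ x ∈ l, x ∈ face γ ∧ ∀ g j, s ≤ e j → x g j = 0}

section Lists

variable [Fintype G] [Fintype V]

theorem initLists_natCast_subset_iUnion_smallLists (m : ℕ) :
    initLists G e m ⊆ ⋃ γ, ListChain.smallLists m (face γ) 1 := by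
  rintro l ⟨hlen, γ, hγ⟩
  exact Set.mem_iUnion.2 ⟨γ, by exact_mod_cast hlen, fun v hv => (hγ v hv).1,
    fun v hv w hw => dist_le_one_of_mem_face (hγ v hv).1 (hγ w hw).1⟩

theorem map_shift_mem_initLists [AddCommGroup G] (g : G) {l : List (Config G V)}
    (hl : l ∈ initLists G e s) :
    l.map (shift g) ∈ initLists G e s := by
  obtain ⟨hlen, γ, hγ⟩ := hl
  refine ⟨by simpa using hlen, fun j => γ j + g, List.forall_mem_map.2 fun x hx =>
    ⟨shift_mem_face (hγ x hx).1 g, fun h j hj => (hγ x hx).2 _ j hj⟩⟩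

end Lists

/-- The configuration all of whose mass is at index `0` and at the vertex number `s`. -/
def initVertex (G : Type*) [Zero G] [DecidableEq G] (e : V ≃ Fin n) (s : ℤ) : Config G V :=
  Pi.single 0 fun j => if (e j : ℤ) = s then 1 else 0

section Cone

variable [Zero G] [DecidableEq G]

theorem initVertex_apply_eq_zero (g : G) {j : V} (hj : (e j : ℤ) ≠ s) :
    initVertex G e s g j = 0 := by
  rcases eq_or_ne g 0 with rfl | hg
  · simp [initVertex, hj]
  · simp [initVertex, hg]

variable [Fintype G] [Fintype V]

theorem initVertex_mem_face (h0 : 0 ≤ s) (hs : s < n) {γ : V → G}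
    (hγ : ∀ j, (e j : ℤ) = s → γ j = 0) : initVertex G e s ∈ face γ := by
  classical
  obtain ⟨i, rfl⟩ := Int.eq_ofNat_of_zero_le h0
  refine single_zero_mem_face ?_ fun j hj => hγ j (by simpa using hj)
  convert single_mem_stdSimplex ℝ (e.symm ⟨i, by lia⟩) using 1
  ext j
  simp [Pi.single_apply, Equiv.eq_symm_apply, Fin.ext_iff]

theorem cons_initVertex_mem_initLists (h0 : 0 ≤ s) (hs : s < n) {l : List (Config G V)}
    (hl : l ∈ initLists G e s) : initVertex G e s :: l ∈ initLists G e (s + 1) := by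
  obtain ⟨hlen, γ, hγ⟩ := hl
  refine ⟨by simp [hlen], fun j => if (e j : ℤ) = s then 0 else γ j, List.forall_mem_cons.2
    ⟨⟨initVertex_mem_face e h0 hs fun j hj => if_pos hj, fun g j hj =>
      initVertex_apply_eq_zero e g (by lia)⟩, fun x hx => ?_⟩⟩
  obtain ⟨hxγ, hxs⟩ := hγ x hx
  refine ⟨⟨hxγ.1, hxγ.2.1, fun g j h => ?_⟩, fun g j hj => hxs g j (by lia)⟩
  exact (if_neg fun hj => h (hxs g j hj.ge)).trans (hxγ.2.2 g j h)

end Cone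

end InitialLists

section Chains

open ListChain VertexAlgebra

variable {p k : ℕ} {V : Type*}

/-- The augmented chains on configurations. -/
noncomputable def chains (p k : ℕ) (V : Type*) :
    EquivariantComplex p k (ListChain (ZMod p) (Config (Fin k → ZMod p) V)) where
  d := ListChain.boundary
  act g := mapVertices _ (shift g)
  d_d := ListChain.boundary_boundary
  act_zero x := by simp [shift_zero, mapVertices_id]
  act_add g h x := by simp [shift_add, mapVertices_comp]
  d_act _ x := ListChain.boundary_mapVertices _ x

variable [Fintype V]

theorem exists_isPartialResolution [Fact p.Prime] {n : ℕ} (e : V ≃ Fin n) :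
    ∃ x, (chains p k V).IsPartialResolution
      (fun s => Finsupp.supported (ZMod p) (ZMod p) (initLists (Fin k → ZMod p) e s))
      (Finsupp.single [] 1) n x := by
  refine (chains p k V).exists_isPartialResolution (h := fun s => cone (initVertex _ e s)) n
    (fun s z => boundary_cone _ z)
    (fun s h0 hs z hz =>
      cone_mem_supported (fun l hl => cons_initVertex_mem_initLists e h0 hs hl) hz)
    (fun s g z hz => mapVertices_mem_supported (fun l hl => map_shift_mem_initLists e g hl) hz)
    (Finsupp.single_mem_supported _ _ ⟨rfl, 0, by simp⟩) (fun g => mapVertices_single _ _ _)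
    ((boundary_single _).trans rfl)

theorem not_exists_labelling [Fact p.Prime] {B : Type*} [Fintype B] (S : LineSystem p k B)
    (hS : ∑ j, S.deg univ j < Fintype.card V) (lab : Config (Fin k → ZMod p) V → B × ZMod p)
    (hlab : ∀ γ, ∀ x ∈ face γ, ∀ g, lab (shift g x) = S.move g (lab x)) {δ : ℝ} (hδ : 0 < δ)
    (hsmall : ∀ γ n, ∀ l ∈ smallLists n (face γ) δ, ∀ b, ∃ a, (b, a) ∉ l.map lab) : False := by
  obtain ⟨x, hx⟩ := exists_isPartialResolution (p := p) (k := k) (Fintype.equivFin V)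
  obtain ⟨Φ, hΦ_boundary, hΦ_map, hΦ_nil, hΦ_small⟩ := exists_fine_subdivision (ZMod p)
    (V := Config (Fin k → ZMod p) V) convex_face (Fintype.card V) zero_le_one hδ
  have hΦx : ∀ α, ∃ n, Φ (x α) ∈
      Finsupp.supported (ZMod p) (ZMod p) (⋃ γ, smallLists n (face γ) δ) := fun α => by
    by_cases hα : 0 ≤ ∑ i, α i ∧ ∑ i, α i < Fintype.card V
    · obtain ⟨n, hn⟩ := Int.eq_ofNat_of_zero_le (a := ∑ i, α i + 1) (by lia)
      exact ⟨n, hΦ_small n (by lia) _ (Finsupp.supported_mono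
        (initLists_natCast_subset_iUnion_smallLists _ n) (hn ▸ hx.mem α))⟩
    · have hzero : x α = 0 := (not_and_or.1 hα).elim (fun h => hx.eq_zero_of_neg α (not_le.1 h))
        fun h => hx.eq_zero_of_le α (not_lt.1 h)
      exact ⟨0, by simp [hzero]⟩
  let L := label (ZMod p) lab ∘ₗ Φ
  have hL_boundary : ∀ c, L (ListChain.boundary c) = VertexAlgebra.boundary (L c) := fun c =>
    (congrArg _ (hΦ_boundary c)).trans (label_boundary lab _)
  have hL_shift : ∀ g α, L (mapVertices _ (shift g) (x α)) = map (S.move g) (L (x α)) :=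
    fun g α => by
      obtain ⟨n, hn⟩ := hΦx α
      refine (congrArg _ (hΦ_map (shift g) (x α))).trans
        (label_mapVertices (fun l hl v hv => ?_) hn)
      obtain ⟨γ, hγ⟩ := Set.mem_iUnion.1 hl
      exact hlab γ v (hγ.2.1 v hv) g
  refine S.not_exists_total_eq_single_of_mem_deleted (fun α => L (x α)) (fun α => ?_)
    (fun α hα => by simp [hx.eq_zero_of_neg α hα]) fun α hα => ?_
  · obtain ⟨n, hn⟩ := hΦx α
    refine label_mem_deleted (fun l hl => ?_) hn
    obtain ⟨γ, hγ⟩ := Set.mem_iUnion.1 hl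
    exact hsmall γ n l hγ
  · rw [← (chains p k V).map_total S.chains L (fun α => hL_boundary _) hL_shift α,
      hx.total_eq α ((sum_le_sum fun j _ => hα j).trans_lt hS)]
    rcases eq_or_ne α 0 with rfl | h0
    · simp [L, hΦ_nil]
    · simp [h0]

end Chains

section Labelling

variable {G V : Type*} [Fintype G]

/-- A chosen vertex carrying mass in the configuration. -/
noncomputable def usedVertex [Nonempty V] (x : Config G V) : V :=
  Classical.epsilon fun j => (∑ g, x g) j ≠ 0

/-- The index of the point of the configuration using the chosen vertex. It singles out one
configuration in each orbit of a free action, namely the one with owner `0`. -/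
noncomputable def owner [Nonempty V] [Nonempty G] (x : Config G V) : G :=
  Classical.epsilon fun g => x g (usedVertex x) ≠ 0

variable [AddCommGroup G]

theorem usedVertex_shift [Nonempty V] (g : G) (x : Config G V) :
    usedVertex (shift g x) = usedVertex x := by
  rw [usedVertex, sum_shift, usedVertex]

variable [Fintype V] [Nonempty V] {γ : V → G} {x : Config G V}

theorem owner_eq (hx : x ∈ face γ) : owner x = γ (usedVertex x) := by
  have hused : (∑ g, x g) (usedVertex x) ≠ 0 :=
    Classical.epsilon_spec (exists_sum_apply_ne_zero_of_mem_face hx)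
  rw [Finset.sum_apply] at hused
  obtain ⟨g, -, hg⟩ := exists_ne_zero_of_sum_ne_zero hused
  exact (hx.2.2 _ _ (Classical.epsilon_spec (p := fun g => x g (usedVertex x) ≠ 0) ⟨g, hg⟩)).symm

theorem owner_shift (hx : x ∈ face γ) (g : G) : owner (shift g x) = owner x + g := by
  rw [owner_eq hx, owner_eq (shift_mem_face hx g), usedVertex_shift]

theorem shift_neg_owner_shift (hx : x ∈ face γ) (g : G) :
    shift (-owner (shift g x)) (shift g x) = shift (-owner x) x := by
  rw [owner_shift hx, ← Function.comp_apply (f := shift _), ← shift_add]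
  congr 2
  abel

theorem exists_equivariant_labelling {p k : ℕ} [NeZero p] {B : Type*} [Nonempty B]
    (S : LineSystem p k B) {Good : Config (Fin k → ZMod p) V → B × ZMod p → Prop}
    (hGood : ∀ g x v, Good x v → Good (shift g x) (S.move g v))
    (hex : ∀ γ, ∀ x ∈ face γ, ∃ v, Good x v) :
    ∃ lab : Config (Fin k → ZMod p) V → B × ZMod p,
      (∀ γ, ∀ x ∈ face γ, ∀ g, lab (shift g x) = S.move g (lab x)) ∧
      ∀ γ, ∀ x ∈ face γ, Good x (lab x) := by
  refine ⟨fun x => S.move (owner x) (Classical.epsilon (Good (shift (-owner x) x))),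
    fun γ x hx g => ?_, fun γ x hx => ?_⟩
  · beta_reduce
    rw [shift_neg_owner_shift hx, owner_shift hx, add_comm, S.move_add, Function.comp_apply]
  · have h := hGood (owner x) _ _
      (Classical.epsilon_spec (hex _ _ (shift_mem_face hx (-owner x))))
    rwa [shift_shift_neg] at h

end Labelling

end Config

/-- The value at `v` of a function on a disjoint union of lines is maximal on the line through `v`
and exceeds some value on that line by at least `ε`. -/
def IsProminent {B A : Type*} (F : B × A → ℝ) (ε : ℝ) (v : B × A) : Prop :=
  (∀ a, F (v.1, a) ≤ F v) ∧ ∃ a, F (v.1, a) ≤ F v - ε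

namespace IsProminent

theorem exists_half_le_abs_sub {B A : Type*} {F : A → B × A → ℝ} {ε : ℝ} {b : B}
    (h : ∀ a, IsProminent (F a) ε (b, a)) (a₀ : A) : ∃ a v, ε / 2 ≤ |F a₀ v - F a v| := by
  obtain ⟨a, ha⟩ := (h a₀).2
  by_contra! hclose
  have ha₀ := (abs_lt.1 (hclose a (b, a₀))).2
  have haa := (abs_lt.1 (hclose a (b, a))).1
  have hmax := (h a).1 a₀
  dsimp only at ha hmax
  linarith

theorem exists_forall_of_compact {X B A : Type*} [TopologicalSpace X] [Finite B] [Finite A]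
    {K : Set X} (hK : IsCompact K) {M : X → B × A → ℝ} (hM : ContinuousOn M K)
    (hne : ∀ x ∈ K, ∃ b a a', M x (b, a) ≠ M x (b, a')) :
    ∃ ε > 0, ∀ x ∈ K, ∃ v, IsProminent (M x) ε v := by
  cases nonempty_fintype B
  cases nonempty_fintype A
  rcases K.eq_empty_or_nonempty with rfl | hne'
  · exact ⟨1, one_pos, by simp⟩
  let D : X → B × A × A → ℝ := fun x w => M x (w.1, w.2.1) - M x (w.1, w.2.2)
  have hMv : ∀ v, ContinuousOn (fun x => M x v) K := continuousOn_pi.1 hM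
  have hD : ContinuousOn (fun x => ‖D x‖) K :=
    (continuousOn_pi.2 fun w => (hMv _).sub (hMv _)).norm
  obtain ⟨x₀, hx₀, hmin⟩ := hK.exists_isMinOn hne' hD
  have hpos : 0 < ‖D x₀‖ := by
    obtain ⟨b, a, a', h⟩ := hne x₀ hx₀
    exact norm_pos_iff.2 fun h0 => h (sub_eq_zero.1 (congrFun h0 (b, a, a')))
  refine ⟨‖D x₀‖, hpos, fun x hx => ?_⟩
  obtain ⟨⟨b, a, a'⟩, h⟩ : ∃ w, ‖D x₀‖ ≤ |D x w| := by
    by_contra! h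
    exact absurd ((pi_norm_lt_iff hpos).2 h) (not_lt.2 (hmin hx))
  have : Nonempty A := ⟨a⟩
  obtain ⟨m, hm⟩ := Finite.exists_max fun a => M x (b, a)
  refine ⟨(b, m), hm, ?_⟩
  rcases le_abs.1 h with h | h
  · exact ⟨a', by dsimp only [D] at *; linarith [hm a]⟩
  · exact ⟨a, by dsimp only [D] at *; linarith [hm a']⟩

theorem move {p k : ℕ} {B : Type*} (S : LineSystem p k B) {F F' : B × ZMod p → ℝ}
    {g : Fin k → ZMod p} (hF : ∀ v, F' (S.move g v) = F v) {ε : ℝ} {v : B × ZMod p}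
    (h : IsProminent F ε v) : IsProminent F' ε (S.move g v) := by
  obtain ⟨hmax, a', ha'⟩ := h
  have hline : ∀ a, F' ((S.move g v).1, a) = F (v.1, a - g (S.level v.1)) := fun a => by
    simp [← hF, LineSystem.move]
  refine ⟨fun a => ?_, a' + g (S.level v.1), ?_⟩
  · rw [hline, hF]
    exact hmax _
  · rwa [hline, hF, add_sub_cancel_right]

end IsProminent

namespace Config

open ListChain

variable {p k : ℕ} {V B : Type*} [Fintype V]

theorem exists_notMem_map_of_isProminent [NeZero p] {M : Config (Fin k → ZMod p) V → B × ZMod p → ℝ}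
    {lab : Config (Fin k → ZMod p) V → B × ZMod p} {ε δ : ℝ} {γ : V → Fin k → ZMod p}
    [Fintype B] (hlab : ∀ x ∈ face γ, IsProminent (M x) ε (lab x))
    (hM : ∀ x ∈ face γ, ∀ y ∈ face γ, dist x y ≤ δ → dist (M x) (M y) < ε / 2) {n : ℕ}
    {l : List (Config (Fin k → ZMod p) V)} (hl : l ∈ smallLists n (face γ) δ) (b : B) :
    ∃ a, (b, a) ∉ l.map lab := by
  by_contra! hfull
  have hx : ∀ a, ∃ x ∈ l, lab x = (b, a) := fun a => by simpa using hfull a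
  choose x hxl hxlab using hx
  have hface : ∀ a, x a ∈ face γ := fun a => hl.2.1 _ (hxl a)
  obtain ⟨a, v, h⟩ := IsProminent.exists_half_le_abs_sub (F := fun a => M (x a))
    (fun a => hxlab a ▸ hlab _ (hface a)) 0
  exact h.not_gt ((dist_le_pi_dist _ _ v).trans_lt
    (hM _ (hface 0) _ (hface a) (hl.2.2 _ (hxl 0) _ (hxl a))))

theorem exists_forall_line_eq [Fact p.Prime] [Fintype B] (S : LineSystem p k B)
    (hS : ∑ j, S.deg univ j < Fintype.card V) {M : Config (Fin k → ZMod p) V → B × ZMod p → ℝ}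
    (hM : ContinuousOn M (⋃ γ, face γ)) (hmove : ∀ g x v, M (shift g x) (S.move g v) = M x v) :
    ∃ γ, ∃ x ∈ face γ, ∀ b a a', M x (b, a) = M x (b, a') := by
  classical
  by_contra! hne
  obtain ⟨ε, hε, hex⟩ := IsProminent.exists_forall_of_compact isCompact_iUnion_face hM
    fun x hx => (Set.mem_iUnion.1 hx).elim fun γ => hne γ x
  have hV : 0 < Fintype.card V := by
    exact_mod_cast (sum_nonneg fun j _ => S.deg_nonneg univ j).trans_lt hS
  obtain ⟨j⟩ : Nonempty V := Fintype.card_pos_iff.1 hV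
  have : Nonempty V := ⟨j⟩
  obtain ⟨b, -⟩ := hne 0 _ (single_zero_mem_face (single_mem_stdSimplex ℝ j) fun _ _ => rfl)
  have : Nonempty B := ⟨b⟩
  obtain ⟨lab, hlab, hprom⟩ := exists_equivariant_labelling S (Good := fun x => IsProminent (M x) ε)
    (fun g x v => IsProminent.move S (hmove g x))
    fun γ x hx => hex x (Set.mem_iUnion.2 ⟨γ, hx⟩)
  obtain ⟨δ, hδ, hMδ⟩ := Metric.uniformContinuousOn_iff.1
    (isCompact_iUnion_face.uniformContinuousOn_of_continuous hM) (ε / 2) (half_pos hε)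
  refine not_exists_labelling S hS lab hlab (half_pos hδ) fun γ n l hl b =>
    exists_notMem_map_of_isProminent (hprom γ) (fun x hx y hy hxy => ?_) hl b
  exact hMδ x (Set.mem_iUnion.2 ⟨γ, hx⟩) y (Set.mem_iUnion.2 ⟨γ, hy⟩)
    (hxy.trans_lt (half_lt_self hδ))

end Config

/-! ### Lines in quotients of an elementary abelian group -/

section Grid

variable {p k : ℕ}

/-- The lines in the group `(ZMod p) ^ k` modulo the coordinates below `i`, in the direction of
coordinate `i`, for all `i`. Each line comes with one copy for every element of `ι`. -/
abbrev GridLine (p k : ℕ) (ι : Type*) := Σ i : Fin k, ({j : Fin k // i < j} → ZMod p) × ι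

/-- The lines `GridLine p k ι` with the translation action; the direction is the level. -/
def gridSystem (p k : ℕ) (ι : Type*) : LineSystem p k (GridLine p k ι) where
  level b := b.1
  translate g b := ⟨b.1, fun j => b.2.1 j + g j, b.2.2⟩
  translate_zero b := by simp
  translate_add g h b := by simp [add_assoc, add_comm (g _)]
  level_translate g b := rfl
  translate_single j t b h := by
    have hzero : ∀ i : {i : Fin k // b.1 < i}, (Pi.single j t : Fin k → ZMod p) i = 0 := fun i =>
      Pi.single_eq_of_ne (h.trans_lt i.2).ne' _
    simp [hzero]

theorem card_gridLine (ι : Type*) [Fintype ι] [NeZero p] :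
    Fintype.card (GridLine p k ι) = (∑ i ∈ range k, p ^ i) * Fintype.card ι := by
  have hcard : ∀ i : Fin k, Fintype.card {j : Fin k // i < j} = k - 1 - i := fun i => by
    rw [Fintype.card_subtype, ← Fin.card_Ioi i]
    congr 1
    ext
    simp
  simp only [Fintype.card_sigma, Fintype.card_prod, Fintype.card_pi, ZMod.card, prod_const,
    card_univ, hcard, ← sum_mul]
  rw [Fin.sum_univ_eq_sum_range fun i => p ^ (k - 1 - i), sum_range_reflect fun i => p ^ i]

theorem sum_deg_gridSystem [NeZero p] (ι : Type*) [Fintype ι] :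
    ∑ j, (gridSystem p k ι).deg univ j = Fintype.card ι * (p ^ k - 1) := by
  have hfiber : ∑ j, #{b : GridLine p k ι | (gridSystem p k ι).level b = j} =
      Fintype.card (GridLine p k ι) :=
    (card_eq_sum_card_fiberwise fun b _ => mem_univ ((gridSystem p k ι).level b)).symm
  simp only [LineSystem.deg, ← mul_sum]
  rw [← Nat.cast_sum, hfiber, card_gridLine, ← mul_geom_sum]
  push_cast
  ring

variable [NeZero p]

/-- The elements of `(ZMod p) ^ k` lying over the point `a` of the line in direction `i` with
higher coordinates `c`. -/
def cylinder (i : Fin k) (c : {j : Fin k // i < j} → ZMod p) (a : ZMod p) :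
    Finset (Fin k → ZMod p) :=
  {g | g i = a ∧ ∀ j : {j : Fin k // i < j}, g j = c j}

theorem mem_cylinder {i : Fin k} {c : {j : Fin k // i < j} → ZMod p} {a : ZMod p}
    {g : Fin k → ZMod p} :
    g ∈ cylinder i c a ↔ g i = a ∧ ∀ j : {j : Fin k // i < j}, g j = c j := by
  simp [cylinder]

theorem sum_cylinder_sub {M : Type*} [AddCommMonoid M] (F : (Fin k → ZMod p) → M)
    (h : Fin k → ZMod p) (i : Fin k) (c : {j : Fin k // i < j} → ZMod p) (a : ZMod p) :
    ∑ g ∈ cylinder i (fun j => c j + h j) (a + h i), F (g - h) = ∑ g ∈ cylinder i c a, F g :=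
  sum_equiv (Equiv.subRight h) (fun g => by simp [mem_cylinder, sub_eq_iff_eq_add]) fun _ _ => rfl

theorem card_cylinder_eq (i : Fin k) (c : {j : Fin k // i < j} → ZMod p) (a a' : ZMod p) :
    #(cylinder i c a) = #(cylinder i c a') := by
  have hzero : ∀ j : {j : Fin k // i < j}, (Pi.single i (a' - a) : Fin k → ZMod p) j = 0 :=
    fun j => Pi.single_eq_of_ne j.2.ne' _
  have h := sum_cylinder_sub (fun _ => 1) (Pi.single i (a' - a)) i c a
  simpa [hzero] using h.symm

variable {M : Type*} [AddCommMonoid M] [IsAddTorsionFree M] {F : (Fin k → ZMod p) → M}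

theorem eq_of_sum_cylinder_eq_of_forall_eq {i : Fin k}
    (hF : ∀ c a a', ∑ g ∈ cylinder i c a, F g = ∑ g ∈ cylinder i c a', F g)
    (hi : ∀ g g' : Fin k → ZMod p, (∀ j, i ≤ j → g j = g' j) → F g = F g')
    {g g' : Fin k → ZMod p} (hgg' : ∀ j, i < j → g j = g' j) : F g = F g' := by
  have hsum : ∀ h : Fin k → ZMod p, (∀ j, i < j → h j = g j) →
      ∑ u ∈ cylinder i (fun j => g j) (h i), F u = #(cylinder i (fun j => g j) (h i)) • F h :=
    fun h hh => sum_eq_card_nsmul fun u hu => hi _ _ fun j hj => by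
      obtain ⟨hui, huj⟩ := mem_cylinder.1 hu
      rcases hj.eq_or_lt with rfl | hj
      · exact hui
      · exact (huj ⟨j, hj⟩).trans (hh j hj).symm
  have hne : #(cylinder i (fun j => g j) (g i)) ≠ 0 :=
    card_ne_zero_of_mem (mem_cylinder.2 ⟨rfl, fun _ => rfl⟩)
  refine nsmul_right_injective hne ?_
  beta_reduce
  rw [← hsum g fun _ _ => rfl, hF _ _ (g' i), hsum g' fun j hj => (hgg' j hj).symm,
    card_cylinder_eq]

theorem eq_of_sum_cylinder_eq
    (hF : ∀ i c a a', ∑ g ∈ cylinder i c a, F g = ∑ g ∈ cylinder i c a', F g)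
    (g g' : Fin k → ZMod p) : F g = F g' := by
  have hF_of_le : ∀ t ≤ k, ∀ g g' : Fin k → ZMod p, (∀ j : Fin k, t ≤ j → g j = g' j) →
      F g = F g' := by
    intro t
    induction t with
    | zero => exact fun _ g g' h => congrArg F (funext fun j => h j (Nat.zero_le _))
    | succ t ih =>
      exact fun ht g g' h =>
        eq_of_sum_cylinder_eq_of_forall_eq (hF ⟨t, ht⟩) (ih (Nat.le_of_succ_le ht)) h
  exact hF_of_le k le_rfl g g' fun j hj => absurd j.2 hj.not_gt

end Grid

namespace Config

variable {p k : ℕ} [Fact p.Prime] {V E : Type*} [Fintype V] [AddCommGroup E] [Module ℝ E]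
  [FiniteDimensional ℝ E] [TopologicalSpace E] [IsTopologicalAddGroup E] [ContinuousSMul ℝ E]
  [T2Space E]

theorem exists_forall_map_eq (hcard : Module.finrank ℝ E * (p ^ k - 1) < Fintype.card V)
    {Ψ : (V → ℝ) → E} (hΨ : ContinuousOn Ψ {y | ∀ j, 0 ≤ y j}) :
    ∃ γ, ∃ x ∈ face (G := Fin k → ZMod p) γ, ∀ g g', Ψ (x g) = Ψ (x g') := by
  let b := Module.finBasis ℝ E
  have hdeg : ∑ j, (gridSystem p k (Fin (Module.finrank ℝ E))).deg univ j < Fintype.card V := by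
    have hpos : 1 ≤ p ^ k := Nat.one_le_iff_ne_zero.2 (pow_ne_zero _ (NeZero.ne p))
    rw [sum_deg_gridSystem, Fintype.card_fin]
    zify [hpos] at hcard
    exact hcard
  let M : Config (Fin k → ZMod p) V → GridLine p k (Fin (Module.finrank ℝ E)) × ZMod p → ℝ :=
    fun x v => ∑ g ∈ cylinder v.1.1 v.1.2.1 v.2, b.coord v.1.2.2 (Ψ (x g))
  have hM : ContinuousOn M (⋃ γ, face γ) := by
    refine continuousOn_pi.2 fun v => continuousOn_finsetSum _ fun g _ => ?_
    refine (b.coord v.1.2.2).continuous_of_finiteDimensional.comp_continuousOn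
      (hΨ.comp (continuous_apply g).continuousOn fun x hx => ?_)
    obtain ⟨γ, hγ⟩ := Set.mem_iUnion.1 hx
    exact hγ.1 g
  obtain ⟨γ, x, hx, h⟩ := exists_forall_line_eq _ hdeg hM fun g x v =>
    sum_cylinder_sub (fun h => b.coord v.1.2.2 (Ψ (x h))) g v.1.1 v.1.2.1 v.2
  exact ⟨γ, x, hx, fun g g' => b.ext_elem fun e => eq_of_sum_cylinder_eq
    (F := fun g => b.coord e (Ψ (x g))) (fun i c a a' => h ⟨i, c, e⟩ a a') g g'⟩

theorem sum_ne_zero_of_mem_face {G : Type*} [Fintype G] {γ : V → G} {x : Config G V}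
    (hx : x ∈ face γ) (hsum : ∀ g g', ∑ j, x g j = ∑ j, x g' j) (g : G) : ∑ j, x g j ≠ 0 := by
  intro h0
  have hmass := hx.2.1
  simp [hsum _ g, h0] at hmass

end Config

/-! ### Homogenization -/

section Perspective

variable {ι E : Type*} [Fintype ι] [NormedAddCommGroup E] [NormedSpace ℝ E]

/-- The extension of a map from the standard simplex to the nonnegative orthant that is homogeneous
of degree one; it is `0` at the origin. -/
noncomputable def perspective (f : (ι → ℝ) → E) (y : ι → ℝ) : E :=
  (∑ j, y j) • f ((∑ j, y j)⁻¹ • y)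

theorem inv_sum_smul_mem_stdSimplex {y : ι → ℝ} (hy : ∀ j, 0 ≤ y j) (h : ∑ j, y j ≠ 0) :
    (∑ j, y j)⁻¹ • y ∈ stdSimplex ℝ ι := by
  refine ⟨fun j => mul_nonneg (inv_nonneg.2 (sum_nonneg fun j _ => hy j)) (hy j), ?_⟩
  simp only [Pi.smul_apply, smul_eq_mul, ← mul_sum]
  exact inv_mul_cancel₀ h

variable {f : (ι → ℝ) → E}

theorem norm_perspective_le {C : ℝ} (hC : ∀ z ∈ stdSimplex ℝ ι, ‖f z‖ ≤ C) {y : ι → ℝ}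
    (hy : ∀ j, 0 ≤ y j) : ‖perspective f y‖ ≤ |∑ j, y j| * C := by
  by_cases h : ∑ j, y j = 0
  · simp [perspective, h]
  · rw [perspective, norm_smul, Real.norm_eq_abs]
    exact mul_le_mul_of_nonneg_left (hC _ (inv_sum_smul_mem_stdSimplex hy h)) (abs_nonneg _)

theorem continuousWithinAt_perspective_of_sum_eq_zero (hf : ContinuousOn f (stdSimplex ℝ ι))
    {y : ι → ℝ} (hy : ∑ j, y j = 0) :
    ContinuousWithinAt (perspective f) {y | ∀ j, 0 ≤ y j} y := by
  obtain ⟨C, hC⟩ := (isCompact_stdSimplex ℝ ι).exists_bound_of_continuousOn hf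
  have hbound : Continuous fun z : ι → ℝ => |∑ j, z j| * C := by fun_prop
  have hlim := (hbound.tendsto y).mono_left (nhdsWithin_le_nhds (s := {y | ∀ j, 0 ≤ y j}))
  rw [hy, abs_zero, zero_mul] at hlim
  rw [ContinuousWithinAt, perspective, hy, zero_smul]
  exact squeeze_zero_norm' (Filter.eventually_of_mem self_mem_nhdsWithin
    fun z hz => norm_perspective_le hC hz) hlim

theorem continuousOn_perspective (hf : ContinuousOn f (stdSimplex ℝ ι)) :
    ContinuousOn (perspective f) {y | ∀ j, 0 ≤ y j} := by
  have hsum : Continuous fun y : ι → ℝ => ∑ j, y j := by fun_prop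
  intro y hy
  by_cases h0 : ∑ j, y j = 0
  · exact continuousWithinAt_perspective_of_sum_eq_zero hf h0
  · refine (continuousWithinAt_inter ((isOpen_ne.preimage hsum).mem_nhds h0)).1 ?_
    have hcont : ContinuousOn (perspective f)
        ({y | ∀ j, 0 ≤ y j} ∩ (fun y : ι → ℝ => ∑ j, y j) ⁻¹' {s | s ≠ 0}) := by
      refine hsum.continuousOn.smul (hf.comp ?_ fun z hz => inv_sum_smul_mem_stdSimplex hz.1 hz.2)
      exact (hsum.continuousOn.inv₀ fun z hz => hz.2).smul continuousOn_id
    exact hcont y ⟨hy, h0⟩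

theorem map_inv_sum_smul_eq_of_perspective_eq {y z : ι → ℝ} (hsum : ∑ j, y j = ∑ j, z j)
    (hy : ∑ j, y j ≠ 0) (h : perspective f y = perspective f z) :
    f ((∑ j, y j)⁻¹ • y) = f ((∑ j, z j)⁻¹ • z) := by
  rw [perspective, perspective, ← hsum] at h
  rw [← hsum]
  exact smul_right_injective E hy h

end Perspective

theorem topological_tverberg_general {V E : Type*} [Fintype V] [NormedAddCommGroup E]
    [NormedSpace ℝ E] [FiniteDimensional ℝ E] {r : ℕ} (hr : IsPrimePow r)
    (hcard : (Module.finrank ℝ E + 1) * (r - 1) < Fintype.card V) {f : (V → ℝ) → E}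
    (hf : ContinuousOn f (stdSimplex ℝ V)) :
    ∃ S : Fin r → Finset V, (∀ i j, i ≠ j → Disjoint (S i) (S j)) ∧
      ∃ q : E, ∀ i, q ∈ f '' {x ∈ stdSimplex ℝ V | ∀ j, j ∉ S i → x j = 0} := by
  obtain ⟨p, k, hp, -, rfl⟩ := (isPrimePow_nat_iff r).1 hr
  have := Fact.mk hp
  obtain ⟨γ, x, hx, h⟩ := Config.exists_forall_map_eq (p := p) (k := k) (E := ℝ × E)
    (by rwa [Module.finrank_prod, Module.finrank_self, add_comm 1])
    (Ψ := fun y => (∑ j, y j, perspective f y))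
    ((by fun_prop : Continuous fun y : V → ℝ => ∑ j, y j).continuousOn.prodMk
      (continuousOn_perspective hf))
  have hsum : ∀ g g', ∑ j, x g j = ∑ j, x g' j := fun g g' => congrArg Prod.fst (h g g')
  have hne := Config.sum_ne_zero_of_mem_face hx hsum
  have hval : ∀ g g', f ((∑ j, x g j)⁻¹ • x g) = f ((∑ j, x g' j)⁻¹ • x g') := fun g g' =>
    map_inv_sum_smul_eq_of_perspective_eq (hsum g g') (hne g) (congrArg Prod.snd (h g g'))
  let φ : Fin (p ^ k) ≃ (Fin k → ZMod p) := (Fintype.equivFinOfCardEq (by simp)).symm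
  refine ⟨fun i => {j | γ j = φ i}, fun i j hij => disjoint_left.2 fun a hi hj => hij ?_,
    f ((∑ j, x 0 j)⁻¹ • x 0), fun i => ⟨(∑ j, x (φ i) j)⁻¹ • x (φ i), ⟨?_, fun j hj => ?_⟩,
      hval _ _⟩⟩
  · exact φ.injective ((mem_filter.1 hi).2.symm.trans (mem_filter.1 hj).2)
  · exact inv_sum_smul_mem_stdSimplex (hx.1 _) (hne _)
  · have hzero : x (φ i) j = 0 := not_imp_comm.1 (hx.2.2 (φ i) j) (by simpa using hj)
    simp [hzero]

/-- **Topological Tverberg theorem (prime power case).** Let `r` be a prime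
power and `N = (d+1)(r-1)`. For every continuous map `f` from the standard
`N`-dimensional simplex to `ℝ^d`, there exist `r` pairwise disjoint subsets
`S₁, …, S_r` of the vertex set of the simplex and a point `p ∈ ℝ^d` lying in
the image under `f` of each of the faces spanned by the `Sᵢ`. -/
theorem topological_tverberg (d r : ℕ) (hd : 1 ≤ d) (hr : IsPrimePow r)
    (f : (Fin ((d + 1) * (r - 1) + 1) → ℝ) → EuclideanSpace ℝ (Fin d))
    (hf : ContinuousOn f (stdSimplex ℝ (Fin ((d + 1) * (r - 1) + 1)))) :
    ∃ S : Fin r → Finset (Fin ((d + 1) * (r - 1) + 1)),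
      (∀ i j, i ≠ j → Disjoint (S i) (S j)) ∧
      ∃ p : EuclideanSpace ℝ (Fin d), ∀ i,
        p ∈ f '' {x ∈ stdSimplex ℝ (Fin ((d + 1) * (r - 1) + 1)) |
          ∀ j, j ∉ S i → x j = 0} := by
  refine topological_tverberg_general hr ?_ hf
  simp
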